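/- arXiv:1603.08715 — 3 statements merged into one kernel-verified Lean document; each statement's English description precedes it below -/
import Mathlib

section
/- Let d, k ≥ 1 and n ≥ 2, and let ℚ_k = (1/k)ℤ ⊆ ℚ. Then α(RFA(ℤ^d,n,k)) = α(EL(ℤ^d,n,k)) = ℚ_k^d, where α denotes the average movement homomorphism; in particular EL(ℤ^d,n,k) is a proper subgroup of RTM(ℤ^d,n,k). -/
open Function

/-- `ℤ^d`. -/
abbrev V (d : ℕ) : Type := Fin d → ℤ

/-- The configuration space `Σ^{ℤ^d} × Q` of the moving-tape model. -/
abbrev Cfg (d n k : ℕ) : Type := (V d → Fin n) × Fin k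

/-- `TapeDefinedBy F F' f T` : `T` is the moving-tape Turing machine defined by the
local rule `f`: if `f(x|_F, q) = (p, q', u)` then `T(x,q) = (σ_u y, q')` where `y`
agrees with `x` outside `F'` and equals `p` on `F'`. -/
def TapeDefinedBy {d n k : ℕ} (F F' : Finset (V d))
    (f : (V d → Fin n) → Fin k → (V d → Fin n) × Fin k × V d)
    (T : Cfg d n k → Cfg d n k) : Prop :=
  -- `f` only depends on the restriction of the tape to `F`, and only the
  -- restriction of its tape output to `F'` matters:
  (∀ x x' q, (∀ v ∈ F, x v = x' v) →
      (∀ v ∈ F', (f x q).1 v = (f x' q).1 v) ∧ (f x q).2 = (f x' q).2) ∧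
  -- the machine equation:
  (∀ (x : V d → Fin n) (q : Fin k),
    (T (x, q)).2 = (f x q).2.1 ∧
    ∀ t, (T (x, q)).1 t =
      if t - (f x q).2.2 ∈ F' then (f x q).1 (t - (f x q).2.2)
      else x (t - (f x q).2.2))

/-- A moving-tape `(d,n,k)`-Turing machine. -/
def IsTMfix {d n k : ℕ} (T : Cfg d n k → Cfg d n k) : Prop :=
  ∃ F F' f, TapeDefinedBy F F' f T

/-- The sup-norm `‖v‖_∞` of `v ∈ ℤ^d`, as a natural number. -/
def supnorm {d : ℕ} (v : V d) : ℕ := Finset.univ.sup fun i => (v i).natAbs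

/-- `s` is a (continuous) shift indicator for the moving-tape machine `T`:
`T(x,q)₁` agrees with `σ_{s(x,q)}(x)` outside a bounded region. -/
def ShiftIndicator {d n k : ℕ} (T : Cfg d n k → Cfg d n k) (s : Cfg d n k → V d) : Prop :=
  Continuous s ∧ ∃ a : ℕ, ∀ (c : Cfg d n k) (v : V d),
    a ≤ supnorm v → (T c).1 v = c.1 (v - s c)

/-- The group `RTM(ℤ^d,n,k)` of reversible Turing machines, in the moving-tape
model: bijective moving-tape machines as permutations of `Σ^{ℤ^d} × Q`. -/
def RTMfixgrp (d n k : ℕ) : Subgroup (Equiv.Perm (Cfg d n k)) :=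
  Subgroup.closure {π | IsTMfix ⇑π}

/-- Reversible finite-state automata, in the moving-tape model: reversible
machines that never change the tape (so that the resulting tape is an exact
shift of the original one). -/
def RFAfixset (d n k : ℕ) : Set (Equiv.Perm (Cfg d n k)) :=
  {π | IsTMfix ⇑π ∧ ∀ c : Cfg d n k, ∃ u : V d, ∀ t, (π c).1 t = c.1 (t - u)}

/-- The group `RFA(ℤ^d,n,k)`. -/
def RFAfixgrp (d n k : ℕ) : Subgroup (Equiv.Perm (Cfg d n k)) :=
  Subgroup.closure (RFAfixset d n k)

/-- Local permutations, in the moving-tape model: reversible machines that never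
move the head, i.e. with constant-`0` shift indicator. -/
def LPfixset (d n k : ℕ) : Set (Equiv.Perm (Cfg d n k)) :=
  {π | IsTMfix ⇑π ∧ ShiftIndicator ⇑π fun _ => 0}

/-- The group `EL(ℤ^d,n,k) = ⟨RFA(ℤ^d,n,k), LP(ℤ^d,n,k)⟩` of elementary machines. -/
def ELfixgrp (d n k : ℕ) : Subgroup (Equiv.Perm (Cfg d n k)) :=
  Subgroup.closure (RFAfixset d n k ∪ LPfixset d n k)

open MeasureTheory in
/-- `r` is the average movement `α(T) = ∫ s_T dμ ∈ ℚ^d ⊆ ℝ^d` of `T`, computed from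
a shift indicator of `T`. -/
def AlphaIs {d n k : ℕ} (μ : Measure (Cfg d n k)) (T : Cfg d n k → Cfg d n k)
    (r : Fin d → ℝ) : Prop :=
  ∃ s : Cfg d n k → V d, ShiftIndicator T s ∧ ∀ i : Fin d, r i = ∫ c, ((s c i : ℤ) : ℝ) ∂μ

open MeasureTheory

section helpers

variable {d n k : ℕ}

def cyl (G : Finset (V d)) (p : V d → Fin n) (q : Fin k) : Set (Cfg d n k) :=
  {c | c.2 = q ∧ ∀ v ∈ G, c.1 v = p v}

lemma mem_cyl_self (G : Finset (V d)) (c : Cfg d n k) : c ∈ cyl G c.1 c.2 := ⟨rfl, fun _ _ => rfl⟩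

lemma isOpen_cyl (G : Finset (V d)) (p : V d → Fin n) (q : Fin k) : IsOpen (cyl G p q) := by
  have : cyl G p q = (Prod.snd ⁻¹' {q}) ∩ ⋂ v ∈ G, (fun c : Cfg d n k => c.1 v) ⁻¹' {p v} := by
    ext c; simp [cyl]
  rw [this]
  refine IsOpen.inter ((isOpen_discrete _).preimage continuous_snd) ?_
  refine isOpen_biInter_finset fun v _ => ?_
  exact (isOpen_discrete _).preimage ((continuous_apply v).comp continuous_fst)

lemma exists_cyl (K : Finset (V d)) {U : Set (Cfg d n k)} (hU : IsOpen U) {c : Cfg d n k}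
    (hc : c ∈ U) : ∃ G, K ⊆ G ∧ cyl G c.1 c.2 ⊆ U := by
  obtain ⟨x, q⟩ := c
  obtain ⟨u, v, hu, hv, hx, hq, huv⟩ := isOpen_prod_iff.1 hU x q hc
  obtain ⟨I, w, hw, hI⟩ := isOpen_pi_iff.1 hu x hx
  classical
  refine ⟨I ∪ K, Finset.subset_union_right, ?_⟩
  rintro ⟨y, r⟩ ⟨h1, h2⟩
  apply huv
  simp only at h1 h2
  subst h1
  refine ⟨hI ?_, hq⟩
  intro a ha
  show y a ∈ w a
  rw [h2 a (Finset.mem_union_left _ ha)]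
  exact (hw a ha).2

lemma cont_of_local {α : Type*} [TopologicalSpace α] (g : Cfg d n k → α)
    (h : ∀ c, ∃ F : Finset (V d), ∀ c' ∈ cyl F c.1 c.2, g c' = g c) : Continuous g := by
  apply IsLocallyConstant.continuous
  rw [IsLocallyConstant.iff_eventually_eq]
  intro c
  obtain ⟨F, hF⟩ := h c
  filter_upwards [(isOpen_cyl F c.1 c.2).mem_nhds (mem_cyl_self F c)] with c' hc' using hF c' hc'

lemma local_of_cont {α : Type*} [TopologicalSpace α] [DiscreteTopology α] {g : Cfg d n k → α}
    (hg : Continuous g) (c : Cfg d n k) : ∃ F : Finset (V d), ∀ c' ∈ cyl F c.1 c.2, g c' = g c := by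
  obtain ⟨G, -, h⟩ := exists_cyl ∅ ((isOpen_discrete {g c}).preimage hg) (c := c) rfl
  exact ⟨G, fun c' hc' => h hc'⟩

lemma tm_cont {T : Cfg d n k → Cfg d n k} (h : IsTMfix T) : Continuous T := by
  obtain ⟨F, F', f, h1, h2⟩ := h
  classical
  apply Continuous.prodMk (f := fun c => (T c).1) (g := fun c => (T c).2)
  · refine continuous_pi fun t => cont_of_local _ ?_
    rintro ⟨x, q⟩
    refine ⟨F ∪ {t - (f x q).2.2}, ?_⟩
    rintro ⟨y, r⟩ ⟨h3, h4⟩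
    simp only at h3 h4
    subst h3
    have h5 := h1 y x r fun v hv => h4 v (Finset.mem_union_left _ hv)
    rw [(h2 _ _).2, (h2 _ _).2, h5.2]
    split_ifs with h6
    · exact h5.1 _ h6
    · exact h4 _ (by simp)
  · refine cont_of_local _ ?_
    rintro ⟨x, q⟩
    refine ⟨F, ?_⟩
    rintro ⟨y, r⟩ ⟨h3, h4⟩
    simp only at h3 h4
    subst h3
    have h5 := h1 y x r h4
    rw [(h2 _ _).1, (h2 _ _).1, h5.2]

lemma supnorm_tri (v w : V d) : supnorm v ≤ supnorm (v - w) + supnorm w := by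
  unfold supnorm
  refine Finset.sup_le fun i _ => ?_
  have h1 := Finset.le_sup (f := fun i => ((v - w) i).natAbs) (Finset.mem_univ i)
  have h2 := Finset.le_sup (f := fun i => (w i).natAbs) (Finset.mem_univ i)
  simp only [Pi.sub_apply] at h1 h2 ⊢
  omega

lemma supnorm_bdd {s : Cfg d n k → V d} (hs : Continuous s) : ∃ b, ∀ c, supnorm (s c) ≤ b := by
  have h : Continuous fun c => supnorm (s c) := (continuous_of_discreteTopology (f := supnorm)).comp hs
  obtain ⟨b, hb⟩ := (isCompact_range h).bddAbove
  exact ⟨b, fun c => hb ⟨c, rfl⟩⟩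

lemma tm_shift {F F' : Finset (V d)} {f : (V d → Fin n) → Fin k → (V d → Fin n) × Fin k × V d}
    {T : Cfg d n k → Cfg d n k} (h : TapeDefinedBy F F' f T) :
    ShiftIndicator T fun c => (f c.1 c.2).2.2 := by
  obtain ⟨h1, h2⟩ := h
  have hc : Continuous fun c : Cfg d n k => (f c.1 c.2).2.2 := by
    refine cont_of_local _ ?_
    rintro ⟨x, q⟩
    refine ⟨F, ?_⟩
    rintro ⟨y, r⟩ ⟨h3, h4⟩
    simp only at h3 h4
    subst h3
    simp only
    rw [(h1 y x r h4).2]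
  refine ⟨hc, ?_⟩
  obtain ⟨b, hb⟩ := supnorm_bdd hc
  refine ⟨F'.sup supnorm + b + 1, ?_⟩
  rintro ⟨x, q⟩ v hv
  rw [(h2 x q).2, if_neg]
  intro hm
  have h3 := Finset.le_sup (f := supnorm) hm
  have h4 := supnorm_tri v (f x q).2.2
  have h5 := hb (x, q)
  simp only at h5
  omega

lemma exists_far (hd : 1 ≤ d) (N : ℕ) : ∃ P : V d, N ≤ supnorm P := by
  refine ⟨fun _ => N, ?_⟩
  have := Finset.le_sup (f := fun i : Fin d => ((fun _ => (N : ℤ)) i : ℤ).natAbs) (Finset.mem_univ ⟨0, hd⟩)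
  simpa [supnorm] using this

lemma shift_unique (hd : 1 ≤ d) (hn : 2 ≤ n) {T : Cfg d n k → Cfg d n k} {s s' : Cfg d n k → V d}
    (h : ShiftIndicator T s) (h' : ShiftIndicator T s') : s = s' := by
  classical
  obtain ⟨hc, a, ha⟩ := h
  obtain ⟨hc', a', ha'⟩ := h'
  funext c
  by_contra hne
  obtain ⟨G, hG⟩ := local_of_cont hc c
  obtain ⟨G', hG'⟩ := local_of_cont hc' c
  obtain ⟨P, hP⟩ := exists_far hd (a + a' + (G ∪ G').sup supnorm + supnorm (s c) + supnorm (s' c) + 1)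
  have e1 : P - s c ∉ G ∪ G' := by
    intro hm
    have h3 := Finset.le_sup (f := supnorm) hm
    have h4 := supnorm_tri P (s c)
    omega
  have e2 : P - s' c ∉ G ∪ G' := by
    intro hm
    have h3 := Finset.le_sup (f := supnorm) hm
    have h4 := supnorm_tri P (s' c)
    omega
  let y : V d → Fin n := Function.update (Function.update c.1 (P - s c) ⟨0, by omega⟩) (P - s' c) ⟨1, by omega⟩
  have hy : ∀ v ∈ G ∪ G', y v = c.1 v := by
    intro v hv
    simp only [y]
    rw [Function.update_of_ne, Function.update_of_ne]
    · rintro rfl; exact e1 hv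
    · rintro rfl; exact e2 hv
  have t1 := hG (y, c.2) ⟨rfl, fun v hv => hy v (Finset.mem_union_left _ hv)⟩
  have t2 := hG' (y, c.2) ⟨rfl, fun v hv => hy v (Finset.mem_union_right _ hv)⟩
  have u1 := ha (y, c.2) P (by omega)
  have u2 := ha' (y, c.2) P (by omega)
  rw [t1] at u1
  rw [t2, u1] at u2
  simp only [y] at u2
  rw [Function.update_self, Function.update_of_ne, Function.update_self] at u2
  · simp [Fin.ext_iff] at u2
  · intro e; exact hne (sub_right_injective e)

lemma image_cyl {F F' : Finset (V d)} {f : (V d → Fin n) → Fin k → (V d → Fin n) × Fin k × V d}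
    {T : Cfg d n k → Cfg d n k} (h : TapeDefinedBy F F' f T) (G : Finset (V d))
    (hF : F ⊆ G) (hF' : F' ⊆ G) (p : V d → Fin n) (q : Fin k) :
    T '' cyl G p q = cyl (G.map (addRightEmbedding (f p q).2.2)) (T (p, q)).1 (T (p, q)).2 := by
  classical
  obtain ⟨h1, h2⟩ := h
  ext ⟨y, r⟩
  constructor
  · rintro ⟨⟨x, q'⟩, ⟨h3, h4⟩, h5⟩
    simp only at h3 h4
    subst h3
    have h6 := h1 x p q' fun v hv => h4 v (hF hv)
    rw [← h5]
    refine ⟨by rw [(h2 _ _).1, (h2 _ _).1, h6.2], ?_⟩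
    intro t ht
    obtain ⟨g, hg, rfl⟩ := Finset.mem_map.1 ht
    rw [(h2 _ _).2, (h2 _ _).2, h6.2]
    simp only [addRightEmbedding_apply, add_sub_cancel_right]
    split_ifs with h7
    · exact h6.1 _ h7
    · exact h4 _ hg
  · rintro ⟨h3, h4⟩
    simp only at h3 h4
    let x : V d → Fin n := fun t => if t ∈ G then p t else y (t + (f p q).2.2)
    have hx : ∀ v ∈ G, x v = p v := fun v hv => by simp [x, hv]
    have h6 := h1 x p q fun v hv => hx v (hF hv)
    refine ⟨(x, q), ⟨rfl, hx⟩, ?_⟩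
    apply Prod.ext
    · funext t
      have h4t : t - (f p q).2.2 ∈ G → y t = (T (p, q)).1 t := fun ht =>
        h4 t (Finset.mem_map.2 ⟨_, ht, by simp⟩)
      rw [(h2 _ _).2] at h4t ⊢
      rw [h6.2]
      simp only
      split_ifs with h7
      · rw [h4t (hF' h7), if_pos h7]; exact h6.1 _ h7
      · rw [if_neg h7] at h4t
        by_cases h8 : t - (f p q).2.2 ∈ G
        · rw [h4t h8, hx _ h8]
        · simp [x, h8]
    · rw [h3, (h2 _ _).1, (h2 _ _).1, h6.2]

def Unif (μ : Measure (Cfg d n k)) : Prop := ∀ (F : Finset (V d)) (p : V d → Fin n) (q : Fin k),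
      μ {c : Cfg d n k | c.2 = q ∧ ∀ v ∈ F, c.1 v = p v} =
        1 / ((k : ENNReal) * (n : ENNReal) ^ F.card)

lemma unif_fin (hn : 2 ≤ n) (hk : 1 ≤ k) {μ : Measure (Cfg d n k)} (hμ : Unif μ) :
    IsFiniteMeasure μ := by
  constructor
  have : (Set.univ : Set (Cfg d n k)) ⊆ ⋃ q : Fin k, cyl ∅ (fun _ => ⟨0, by omega⟩) q := by
    intro c _
    simp [cyl]
  refine lt_of_le_of_lt (measure_mono this) ?_
  refine lt_of_le_of_lt (measure_iUnion_fintype_le _ _) ?_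
  refine ENNReal.sum_lt_top.2 fun q _ => ?_
  rw [cyl, hμ]
  simp only [Finset.card_empty, pow_zero, mul_one, one_div]
  refine ENNReal.inv_lt_top.2 ?_
  exact_mod_cast hk

lemma tm_mp {μ : Measure (Cfg d n k)} [IsFiniteMeasure μ] (hμ : Unif μ) (T : Equiv.Perm (Cfg d n k))
    (hT : IsTMfix ⇑T) : MeasurePreserving ⇑T μ μ := by
  classical
  have hc := tm_cont hT
  have hc' := hc.continuous_symm_of_equiv_compact_to_t2
  obtain ⟨F, F', f, h⟩ := hT
  let S : Set (Set (Cfg d n k)) := {C | ∃ G p q, F ∪ F' ⊆ G ∧ C = cyl G p q}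
  have hb : TopologicalSpace.IsTopologicalBasis S := by
    apply TopologicalSpace.isTopologicalBasis_of_isOpen_of_nhds
    · rintro u ⟨G, p, q, -, rfl⟩
      exact isOpen_cyl _ _ _
    · intro a u ha hu
      obtain ⟨G, hG, hs⟩ := exists_cyl (F ∪ F') hu ha
      exact ⟨_, ⟨G, _, _, hG, rfl⟩, mem_cyl_self _ _, hs⟩
  have key : μ = μ.map ⇑T.symm := by
    refine ext_of_generate_finite S ?_ ?_ ?_ ?_
    · rw [← hb.borel_eq_generateFrom]; exact BorelSpace.measurable_eq
    · rintro _ ⟨G, p, q, hG, rfl⟩ _ ⟨G', p', q', hG', rfl⟩ ⟨c, hc1, hc2⟩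
      refine ⟨G ∪ G', c.1, c.2, hG.trans Finset.subset_union_left, ?_⟩
      ext e
      simp only [cyl, Set.mem_inter_iff, Set.mem_ofPred_eq, Finset.mem_union] at hc1 hc2 ⊢
      constructor
      · rintro ⟨⟨a1, a2⟩, a3, a4⟩
        refine ⟨a1.trans hc1.1.symm, ?_⟩
        rintro v (hv | hv)
        · rw [a2 v hv, hc1.2 v hv]
        · rw [a4 v hv, hc2.2 v hv]
      · rintro ⟨a1, a2⟩
        refine ⟨⟨a1.trans hc1.1, fun v hv => ?_⟩, a1.trans hc2.1, fun v hv => ?_⟩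
        · rw [a2 v (Or.inl hv), hc1.2 v hv]
        · rw [a2 v (Or.inr hv), hc2.2 v hv]
    · rintro _ ⟨G, p, q, hG, rfl⟩
      rw [Measure.map_apply hc'.measurable (isOpen_cyl _ _ _).measurableSet,
        ← Equiv.image_eq_preimage_symm, image_cyl h G (Finset.subset_union_left.trans hG)
        (Finset.subset_union_right.trans hG)]
      unfold cyl
      rw [hμ, hμ, Finset.card_map]
    · rw [Measure.map_apply hc'.measurable MeasurableSet.univ, Set.preimage_univ]
  refine ⟨hc.measurable, ?_⟩
  nth_rewrite 1 [key]
  rw [Measure.map_map hc.measurable hc'.measurable]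
  simp

lemma cont_int {μ : Measure (Cfg d n k)} [IsFiniteMeasure μ] {g : Cfg d n k → ℝ}
    (hg : Continuous g) : Integrable g μ :=
  hg.integrable_of_hasCompactSupport (HasCompactSupport.of_compactSpace _)

lemma cont_coord {s : Cfg d n k → V d} (hs : Continuous s) (i : Fin d) :
    Continuous fun c => ((s c i : ℤ) : ℝ) :=
  (continuous_of_discreteTopology (f := fun v : V d => ((v i : ℤ) : ℝ))).comp hs

lemma mp_int {μ : Measure (Cfg d n k)} {T : Cfg d n k → Cfg d n k} (hT : MeasurePreserving T μ μ)
    {g : Cfg d n k → ℝ} (hg : Continuous g) : ∫ c, g (T c) ∂μ = ∫ c, g c ∂μ := by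
  rw [← integral_map hT.measurable.aemeasurable hg.measurable.aestronglyMeasurable, hT.map_eq]

def Good (μ : Measure (Cfg d n k)) (T : Equiv.Perm (Cfg d n k)) : Prop :=
  MeasurePreserving ⇑T μ μ ∧ Continuous ⇑T ∧ ∃ s, ShiftIndicator ⇑T s ∧
    ∀ i, ∃ m : ℤ, ∫ c, ((s c i : ℤ) : ℝ) ∂μ = (m : ℝ) / k

lemma good_one (μ : Measure (Cfg d n k)) : Good μ 1 := by
  refine ⟨MeasurePreserving.id μ, continuous_id, fun _ => 0, ⟨continuous_const, 0, ?_⟩, ?_⟩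
  · intro c v _; simp
  · intro i; exact ⟨0, by simp⟩

lemma good_mul {μ : Measure (Cfg d n k)} [IsFiniteMeasure μ] {T U : Equiv.Perm (Cfg d n k)}
    (hT : Good μ T) (hU : Good μ U) : Good μ (T * U) := by
  obtain ⟨m1, c1, s1, ⟨cs1, a1, ha1⟩, i1⟩ := hT
  obtain ⟨m2, c2, s2, ⟨cs2, a2, ha2⟩, i2⟩ := hU
  refine ⟨m1.comp m2, c1.comp c2, fun c => s1 (U c) + s2 c, ⟨(cs1.comp c2).add cs2, ?_⟩, ?_⟩
  · obtain ⟨b, hb⟩ := supnorm_bdd cs1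
    refine ⟨a1 + a2 + b, fun c v hv => ?_⟩
    rw [Equiv.Perm.mul_apply, ha1 _ _ (by omega), ha2, sub_sub]
    have h1 := supnorm_tri v (s1 (U c))
    have h2 := hb (U c)
    omega
  · intro i
    obtain ⟨x, hx⟩ := i1 i
    obtain ⟨y, hy⟩ := i2 i
    refine ⟨x + y, ?_⟩
    simp only [Pi.add_apply, Int.cast_add]
    have hi := cont_coord cs1 i
    rw [integral_add (f := fun c => ((s1 (U c) i : ℤ) : ℝ)) (cont_int (hi.comp c2)) (cont_int (cont_coord cs2 i)), mp_int m2 hi, hx, hy]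
    ring

lemma good_inv {μ : Measure (Cfg d n k)} [IsFiniteMeasure μ] {T : Equiv.Perm (Cfg d n k)}
    (hT : Good μ T) : Good μ T⁻¹ := by
  obtain ⟨m1, c1, s1, ⟨cs1, a1, ha1⟩, i1⟩ := hT
  have c2 : Continuous ⇑T⁻¹ := c1.continuous_symm_of_equiv_compact_to_t2
  have m2 : MeasurePreserving ⇑T⁻¹ μ μ := by
    refine ⟨c2.measurable, ?_⟩
    nth_rewrite 1 [← m1.map_eq]
    rw [Measure.map_map c2.measurable c1.measurable]
    have : ⇑T⁻¹ ∘ ⇑T = id := by funext c; simp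
    rw [this, Measure.map_id]
  refine ⟨m2, c2, fun c => - s1 (T⁻¹ c), ⟨(cs1.comp c2).neg, ?_⟩, ?_⟩
  · obtain ⟨b, hb⟩ := supnorm_bdd cs1
    refine ⟨a1 + b, fun c v hv => ?_⟩
    have h := ha1 (T⁻¹ c) (v + s1 (T⁻¹ c)) ?_
    · rw [add_sub_cancel_right, show T (T⁻¹ c) = c from T.apply_symm_apply c] at h
      rw [← h, sub_neg_eq_add]
    · have h1 := supnorm_tri v (- s1 (T⁻¹ c))
      rw [sub_neg_eq_add] at h1
      have h2 := hb (T⁻¹ c)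
      have h3 : supnorm (- s1 (T⁻¹ c)) = supnorm (s1 (T⁻¹ c)) := by simp [supnorm]
      omega
  · intro i
    obtain ⟨x, hx⟩ := i1 i
    refine ⟨-x, ?_⟩
    simp only [Pi.neg_apply, Int.cast_neg]
    rw [integral_neg, mp_int m2 (cont_coord cs1 i), hx]
    ring

lemma rfa_exact (hd : 1 ≤ d) (hn : 2 ≤ n) {F F' : Finset (V d)}
    {f : (V d → Fin n) → Fin k → (V d → Fin n) × Fin k × V d}
    {T : Cfg d n k → Cfg d n k} (h : TapeDefinedBy F F' f T)
    (hex : ∀ c : Cfg d n k, ∃ u : V d, ∀ t, (T c).1 t = c.1 (t - u)) (c : Cfg d n k) (t : V d) :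
    (T c).1 t = c.1 (t - (f c.1 c.2).2.2) := by
  classical
  obtain ⟨h1, h2⟩ := h
  obtain ⟨x, q⟩ := c
  by_cases ht : t - (f x q).2.2 ∈ F'
  swap
  · rw [(h2 _ _).2, if_neg ht]
  let B := F ∪ F'
  let R := B.sup supnorm
  let i0 : Fin d := ⟨0, hd⟩
  have hR : ∀ b ∈ B, b i0 ≤ R := by
    intro b hb
    have e1 := Finset.le_sup (f := supnorm) hb
    have e2 := Finset.le_sup (f := fun i => (b i).natAbs) (Finset.mem_univ i0)
    change _ ≤ R at e1
    change _ ≤ supnorm b at e2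
    omega
  let P : V d := fun _ => (R : ℤ) + 1
  have hP0 : P i0 = R + 1 := rfl
  have hPB : P ∉ B := by
    intro hm
    have := hR P hm
    omega
  let o : Fin n := ⟨1, by omega⟩
  let z : Fin n := ⟨0, by omega⟩
  have hoz : o ≠ z := by simp [o, z, Fin.ext_iff]
  let y : V d → Fin n := fun t => if t = P then o else if t ∈ B then x t else z
  have hyB : ∀ b ∈ B, y b = x b := by
    intro b hb
    have : b ≠ P := by rintro rfl; exact hPB hb
    simp [y, this, hb]
  have hyP : y P = o := by simp [y]
  have hsupp : ∀ t, y t = o → t = P ∨ t ∈ B := by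
    intro t ht
    by_contra hcon
    push Not at hcon
    simp only [y, hcon.1, hcon.2, if_false] at ht
    exact hoz ht.symm
  have h3 := h1 y x q fun v hv => hyB v (Finset.mem_union_left _ hv)
  set s := (f x q).2.2 with hs
  have hys : (f y q).2.2 = s := by rw [h3.2]
  obtain ⟨u, hu⟩ := hex (y, q)
  have hu2 : ∀ t, t - s ∉ F' → y (t - u) = y (t - s) := by
    intro t ht
    have e1 := hu t
    have e2 := (h2 y q).2 t
    rw [hys, if_neg ht] at e2
    exact e1.symm.trans e2
  have hus : u = s := by
    have e1 := hu2 (P + s) (by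
      rw [add_sub_cancel_right]; exact fun hm => hPB (Finset.mem_union_right _ hm))
    rw [add_sub_cancel_right, hyP] at e1
    rcases hsupp _ e1 with e2 | e2
    · rw [add_sub_assoc] at e2
      exact (sub_eq_zero.1 (add_eq_left.1 e2)).symm
    · exfalso
      have e3 : P + u - s ∉ B := by
        intro hm
        have a1 := hR _ hm
        have a2 := hR _ e2
        simp only [Pi.add_apply, Pi.sub_apply] at a1 a2
        omega
      have e4 := hu2 (P + u) (fun hm => e3 (Finset.mem_union_right _ hm))
      rw [add_sub_cancel_right, hyP] at e4
      rcases hsupp _ e4.symm with e5 | e5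
      · have a1 := congrFun e5 i0
        have a2 := hR _ e2
        simp only [Pi.add_apply, Pi.sub_apply] at a1 a2
        omega
      · exact e3 e5
  have e1 := hu t
  rw [hus] at e1
  simp only at e1
  rw [hyB _ (Finset.mem_union_right _ ht), (h2 y q).2, hys, if_pos ht, h3.1 _ ht] at e1
  rw [(h2 x q).2, if_pos ht]
  exact e1

def sh (x : V d → Fin n) (v : V d) : V d → Fin n := fun t => x (t + v)

lemma rfa_sum (T : Equiv.Perm (Cfg d n k)) (u : Cfg d n k → V d) (F : Finset (V d))
    (hu : ∀ c c' : Cfg d n k, c.2 = c'.2 → (∀ v ∈ F, c.1 v = c'.1 v) →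
      u c = u c' ∧ (T c).2 = (T c').2)
    (hT : ∀ c t, (T c).1 t = c.1 (t - u c)) (x x' : V d → Fin n) (hx : ∀ t ≠ 0, x t = x' t) :
    ∑ v ∈ F, ∑ q, u (sh x (-v), q) = ∑ v ∈ F, ∑ q, u (sh x' (-v), q) := by
  classical
  let φ : (V d → Fin n) → V d × Fin k → V d × Fin k := fun x a =>
    (a.1 - u (sh x a.1, a.2), (T (sh x a.1, a.2)).2)
  have hφT : ∀ x a, T (sh x a.1, a.2) = (sh x (φ x a).1, (φ x a).2) := by
    intro x a
    apply Prod.ext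
    · funext t
      rw [hT]
      simp only [sh, φ]
      congr 1
      abel
    · rfl
  have hbij : ∀ x, Function.Bijective (φ x) := by
    intro x
    constructor
    · intro a b hab
      have e1 := hφT x a
      rw [hab, ← hφT x b] at e1
      have e2 := T.injective e1
      have e3 := congrArg Prod.fst hab
      simp only [φ] at e3
      rw [e2] at e3
      have e4 : a.1 = b.1 := by simpa using e3
      exact Prod.ext e4 (Prod.ext_iff.1 e2).2
    · rintro ⟨w, q'⟩
      obtain ⟨⟨y, q⟩, hy⟩ := T.surjective (sh x w, q')
      have e1 : y = sh x (w + u (y, q)) := by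
        funext t
        have := hT (y, q) (t + u (y, q))
        rw [hy] at this
        simp only [sh, add_sub_cancel_right] at this ⊢
        rw [← this]
        congr 1
        abel
      refine ⟨(w + u (y, q), q), ?_⟩
      simp only [φ]
      rw [← e1, hy]
      simp
  let e : Equiv.Perm (V d × Fin k) :=
    (Equiv.ofBijective _ (hbij x)).trans (Equiv.ofBijective _ (hbij x')).symm
  have he : ∀ a, φ x' (e a) = φ x a := fun a =>
    (Equiv.ofBijective _ (hbij x')).apply_symm_apply (φ x a)
  let S : Finset (V d × Fin k) := (F.map (Equiv.neg (V d)).toEmbedding) ×ˢ Finset.univ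
  have hS : ∀ a, a ∉ S → φ x a = φ x' a := by
    rintro ⟨v, q⟩ ha
    have hv : -v ∉ F := by
      intro hm
      apply ha
      simp only [S, Finset.mem_product, Finset.mem_univ, and_true]
      exact Finset.mem_map.2 ⟨-v, hm, by simp⟩
    have := hu (sh x v, q) (sh x' v, q) rfl (by
      intro t ht
      apply hx
      intro h0
      apply hv
      rw [← eq_neg_of_add_eq_zero_left h0]
      exact ht)
    simp only [φ]
    rw [this.1, this.2]
  have h1 := Equiv.Perm.sum_comp e S (fun a => (φ x' a).1) (by
    intro a ha
    by_contra hcon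
    apply ha
    apply (hbij x').1
    rw [he, hS a hcon])
  simp only [he] at h1
  simp only [φ, Finset.sum_sub_distrib] at h1
  have h2 := sub_right_injective h1
  simpa [S, Finset.sum_product] using h2

lemma tele {α : Type*} [LinearOrder α] {M : Type*} [AddCommGroup M] (h : Finset α → M) (F : Finset α) :
    ∑ w ∈ F, (h (F.filter (· ≤ w)) - h (F.filter (· < w))) = h F - h ∅ := by
  classical
  induction F using Finset.induction_on_max with
  | empty => simp
  | insert a s ha ih =>
    have hna : a ∉ s := fun hm => lt_irrefl _ (ha a hm)
    rw [Finset.sum_insert hna]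
    have e1 : (insert a s).filter (· ≤ a) = insert a s := by
      apply Finset.filter_true_of_mem
      intro x hx
      rcases Finset.mem_insert.1 hx with rfl | hx
      · exact le_rfl
      · exact (ha x hx).le
    have e2 : (insert a s).filter (· < a) = s := by
      rw [Finset.filter_insert, if_neg (lt_irrefl _)]
      exact Finset.filter_true_of_mem ha
    have e3 : ∀ w ∈ s, (h ((insert a s).filter (· ≤ w)) - h ((insert a s).filter (· < w)))
        = (h (s.filter (· ≤ w)) - h (s.filter (· < w))) := by
      intro w hw
      rw [Finset.filter_insert, if_neg (not_le.2 (ha w hw)), Finset.filter_insert,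
        if_neg (not_lt.2 (ha w hw).le)]
    rw [Finset.sum_congr rfl e3, ih, e1, e2]
    abel

lemma tm_shiftmap (v : V d) : ∃ T : Equiv.Perm (Cfg d n k), IsTMfix ⇑T ∧
    ∀ c, T c = (sh c.1 v, c.2) := by
  refine ⟨⟨fun c => (sh c.1 v, c.2), fun c => (sh c.1 (-v), c.2), ?_, ?_⟩, ?_, fun _ => rfl⟩
  · intro c; apply Prod.ext; · (funext t; simp [sh])
    · rfl
  · intro c; apply Prod.ext; · (funext t; simp [sh])
    · rfl
  · refine ⟨∅, ∅, fun x q => (x, q, -v), ?_, ?_⟩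
    · intro x x' q _; simp
    · intro x q; simp [sh]

lemma tm_rot [NeZero k] (j : Fin k) : ∃ T : Equiv.Perm (Cfg d n k), IsTMfix ⇑T ∧
    ∀ c, T c = (c.1, c.2 + j) := by
  refine ⟨⟨fun c => (c.1, c.2 + j), fun c => (c.1, c.2 - j), ?_, ?_⟩, ?_, fun _ => rfl⟩
  · intro c; simp
  · intro c; simp
  · refine ⟨∅, ∅, fun x q => (x, q + j, 0), ?_, ?_⟩
    · intro x x' q _; simp
    · intro x q; simp

open Classical in
noncomputable def mask (z : Fin n) (A : Set (V d)) (x : V d → Fin n) : V d → Fin n :=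
  fun t => if t ∈ A then x t else z

lemma rfa_int {μ : Measure (Cfg d n k)} [IsFiniteMeasure μ] (hμ : Unif μ) (hk : 1 ≤ k)
    (hmass : μ.real Set.univ = 1) (z : Fin n)
    (T : Equiv.Perm (Cfg d n k)) (u : Cfg d n k → V d) (F : Finset (V d))
    (hu : ∀ c c' : Cfg d n k, c.2 = c'.2 → (∀ v ∈ F, c.1 v = c'.1 v) →
      u c = u c' ∧ (T c).2 = (T c').2)
    (hT : ∀ c t, (T c).1 t = c.1 (t - u c)) (i : Fin d) :
    ∫ c, ((u c i : ℤ) : ℝ) ∂μ = ((∑ q, u (fun _ => z, q) i : ℤ) : ℝ) / k := by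
  classical
  have : NeZero k := ⟨by omega⟩
  have huc : Continuous u := cont_of_local _ fun c => ⟨F, fun c' hc' => (hu c' c hc'.1 hc'.2).1⟩
  let g : (V d → Fin n) → ℝ := fun x => ∑ q, ((u (x, q) i : ℤ) : ℝ)
  have hg : ∀ x x', (∀ v ∈ F, x v = x' v) → g x = g x' := by
    intro x x' h
    refine Finset.sum_congr rfl fun q _ => ?_
    rw [(hu (x, q) (x', q) rfl h).1]
  have hgm : ∀ A, Continuous fun c : Cfg d n k => g (mask z A c.1) := by
    intro A
    refine cont_of_local _ fun c => ⟨F, fun c' hc' => hg _ _ ?_⟩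
    intro v hv
    simp only [mask]
    rw [hc'.2 v hv]
  have hgu : ∀ x : V d → Fin n, mask z Set.univ x = x := by intro x; funext t; simp [mask]
  -- average over states
  have step1 : (k : ℝ) * ∫ c, ((u c i : ℤ) : ℝ) ∂μ = ∫ c, g c.1 ∂μ := by
    have e1 : ∀ j : Fin k, ∫ c, ((u (c.1, c.2 + j) i : ℤ) : ℝ) ∂μ = ∫ c, ((u c i : ℤ) : ℝ) ∂μ := by
      intro j
      obtain ⟨U, hU, hU'⟩ := tm_rot (d := d) (n := n) j
      have := mp_int (tm_mp hμ U hU) (cont_coord huc i)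
      simpa only [hU'] using this
    have e2 : ∀ c : Cfg d n k, g c.1 = ∑ j : Fin k, ((u (c.1, c.2 + j) i : ℤ) : ℝ) := by
      intro c
      exact (Equiv.sum_comp (Equiv.addLeft c.2) (fun q => ((u (c.1, q) i : ℤ) : ℝ))).symm
    simp only [e2]
    rw [integral_finsetSum, Finset.sum_congr rfl fun j _ => e1 j]
    · simp
    · intro j _
      refine cont_int ((cont_coord huc i).comp ?_)
      obtain ⟨U, hU, hU'⟩ := tm_rot (d := d) (n := n) j
      have := tm_cont hU
      have e3 : (fun c : Cfg d n k => (c.1, c.2 + j)) = ⇑U := by funext c; rw [hU']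
      rw [e3]; exact this
  let h : Set (V d) → ℝ := fun A => ∫ c, g (mask z A c.1) ∂μ
  have hshift : ∀ (A : Set (V d)) (w : V d),
      ∫ c, g (sh (mask z A c.1) (-w)) ∂μ = h {t | t - w ∈ A} := by
    intro A w
    obtain ⟨U, hU, hU'⟩ := tm_shiftmap (d := d) (n := n) (k := k) (-w)
    have := mp_int (tm_mp hμ U hU) (hgm {t | t - w ∈ A})
    simp only [h]
    rw [← this]
    congr 1
    funext c
    rw [hU']
    congr 1
    
  have hcs : ∀ (A : Set (V d)) (w : V d),
      Integrable (fun c : Cfg d n k => g (sh (mask z A c.1) (-w))) μ := by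
    intro A w
    obtain ⟨U, hU, hU'⟩ := tm_shiftmap (d := d) (n := n) (k := k) (-w)
    have := cont_int (μ := μ) ((hgm {t | t - w ∈ A}).comp (tm_cont hU))
    convert this using 1
    funext c
    simp only [Function.comp, hU']
    congr 1
  let L : Set (V d) := {t | toLex t ≤ toLex (0 : V d)}
  let L' : Set (V d) := {t | toLex t < toLex (0 : V d)}
  have hLw : ∀ w, {t : V d | t - w ∈ L} = {t | toLex t ≤ toLex w} := by
    intro w; ext t
    change toLex t - toLex w ≤ 0 ↔ toLex t ≤ toLex w
    exact sub_nonpos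
  have hLw' : ∀ w, {t : V d | t - w ∈ L'} = {t | toLex t < toLex w} := by
    intro w; ext t
    change toLex t - toLex w < 0 ↔ toLex t < toLex w
    exact sub_neg
  have hsum : ∑ w ∈ F, h {t | toLex t ≤ toLex w} = ∑ w ∈ F, h {t | toLex t < toLex w} := by
    have e : ∀ c : Cfg d n k, ∑ w ∈ F, g (sh (mask z L c.1) (-w)) =
        ∑ w ∈ F, g (sh (mask z L' c.1) (-w)) := by
      intro c
      have := rfa_sum T u F hu hT (mask z L c.1) (mask z L' c.1) (by
        intro t ht
        have : t ∈ L ↔ t ∈ L' := by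
          change toLex t ≤ toLex 0 ↔ toLex t < toLex 0
          constructor
          · intro h; exact lt_of_le_of_ne h fun hh => ht (toLex.injective hh)
          · exact fun h => le_of_lt h
        simp only [mask, this])
      have e2 := congrFun this i
      simp only [Finset.sum_apply] at e2
      simp only [g]
      exact_mod_cast e2
    have e2 : ∫ c, ∑ w ∈ F, g (sh (mask z L c.1) (-w)) ∂μ =
        ∫ c, ∑ w ∈ F, g (sh (mask z L' c.1) (-w)) ∂μ := by simp only [e]
    rw [integral_finsetSum _ (fun w _ => hcs L w), integral_finsetSum _ (fun w _ => hcs L' w)] at e2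
    simpa only [hshift, hLw, hLw'] using e2
  have hinter : ∀ A B : Set (V d), (∀ v ∈ F, v ∈ A ↔ v ∈ B) → h A = h B := by
    intro A B hAB
    simp only [h]
    congr 1
    funext c
    apply hg
    intro v hv
    simp only [mask, hAB v hv]
  have ht := tele (α := Lex (Fin d → ℤ)) (fun A => h {t | toLex t ∈ A}) (F.map toLex.toEmbedding)
  rw [Finset.sum_map] at ht
  have ht2 : ∑ w ∈ F, (h {t | toLex t ≤ toLex w} - h {t | toLex t < toLex w}) = h Set.univ - h ∅ := by
    have e1 : h {t | toLex t ∈ F.map toLex.toEmbedding} = h Set.univ := by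
      apply hinter; intro v hv; simpa using hv
    have e2 : h {t | toLex t ∈ (∅ : Finset (Lex (Fin d → ℤ)))} = h ∅ := by
      apply hinter; intro v hv; simp
    rw [← e1, ← e2, ← ht]
    refine Finset.sum_congr rfl fun w _ => ?_
    congr 1
    · apply hinter; intro v hv; simp [hv]
    · apply hinter; intro v hv; simp [hv]; rfl
  rw [Finset.sum_sub_distrib, hsum, sub_self] at ht2
  have h1 : h Set.univ = ∫ c, g c.1 ∂μ := by simp only [h, hgu]
  have h0 : h ∅ = g fun _ => z := by
    have : ∀ x : V d → Fin n, mask z ∅ x = fun _ => z := by intro x; funext t; simp [mask]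
    simp only [h, this]
    rw [integral_const, hmass, one_smul]
  have hkr : (k : ℝ) ≠ 0 := by exact_mod_cast (by omega : k ≠ 0)
  rw [eq_div_iff hkr, mul_comm, step1, ← h1, sub_eq_zero.1 ht2.symm, h0]
  simp [g]

lemma unif_mass (hn : 2 ≤ n) (hk : 1 ≤ k) {μ : Measure (Cfg d n k)} (hμ : Unif μ) :
    μ.real Set.univ = 1 := by
  have h1 := sum_measure_preimage_singleton (μ := μ) (f := fun c : Cfg d n k => c.2) Finset.univ
    (fun q _ => measurable_snd (measurableSet_singleton q))
  have h2 : ∀ q : Fin k, μ ((fun c : Cfg d n k => c.2) ⁻¹' {q}) = (k : ENNReal)⁻¹ := by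
    intro q
    have := hμ ∅ (fun _ => ⟨0, by omega⟩) q
    simp only [Finset.card_empty, pow_zero, mul_one, one_div] at this
    rw [← this]
    congr 1
    ext c
    simp
  simp only [h2, Finset.sum_const, Finset.card_univ, Fintype.card_fin, Finset.coe_univ,
    Set.preimage_univ, nsmul_eq_mul] at h1
  rw [ENNReal.mul_inv_cancel (by exact_mod_cast (by omega : k ≠ 0)) (by simp)] at h1
  rw [Measure.real, ← h1]
  simp

lemma good_rfa (hd : 1 ≤ d) (hn : 2 ≤ n) (hk : 1 ≤ k) {μ : Measure (Cfg d n k)}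
    [IsFiniteMeasure μ] (hμ : Unif μ) {T : Equiv.Perm (Cfg d n k)} (hT : T ∈ RFAfixset d n k) :
    Good μ T := by
  obtain ⟨h1, h2⟩ := hT
  refine ⟨tm_mp hμ T h1, tm_cont h1, ?_⟩
  obtain ⟨F, F', f, h⟩ := h1
  refine ⟨_, tm_shift h, fun i => ⟨_, rfa_int hμ hk (unif_mass hn hk hμ) ⟨0, by omega⟩ T _ F ?_
    (rfa_exact hd hn h h2) i⟩⟩
  rintro ⟨x, q⟩ ⟨x', q'⟩ h3 h4
  simp only at h3 h4
  subst h3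
  have h5 := (h.1 x x' q h4).2
  exact ⟨by simp only [h5], by rw [(h.2 _ _).1, (h.2 _ _).1, h5]⟩

lemma good_el (hd : 1 ≤ d) (hn : 2 ≤ n) (hk : 1 ≤ k) {μ : Measure (Cfg d n k)}
    [IsFiniteMeasure μ] (hμ : Unif μ) {T : Equiv.Perm (Cfg d n k)} (hT : T ∈ ELfixgrp d n k) :
    Good μ T := by
  refine Subgroup.closure_induction (p := fun T _ => Good μ T) ?_ (good_one μ)
    (fun _ _ _ _ => good_mul) (fun _ _ => good_inv) hT
  rintro π (h | h)
  · exact good_rfa hd hn hk hμ h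
  · exact ⟨tm_mp hμ π h.1, tm_cont h.1, _, h.2, fun i => ⟨0, by simp⟩⟩

lemma el_alpha (hd : 1 ≤ d) (hn : 2 ≤ n) (hk : 1 ≤ k) {μ : Measure (Cfg d n k)}
    [IsFiniteMeasure μ] (hμ : Unif μ) {T : Equiv.Perm (Cfg d n k)} (hT : T ∈ ELfixgrp d n k)
    {r : Fin d → ℝ} (hr : AlphaIs μ ⇑T r) (i : Fin d) : ∃ m : ℤ, r i = (m : ℝ) / k := by
  obtain ⟨-, -, s, hs, hm⟩ := good_el hd hn hk hμ hT
  obtain ⟨s', hs', hr⟩ := hr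
  rw [hr i, shift_unique hd hn hs' hs]
  exact hm i

lemma rfa_attain (hd : 1 ≤ d) (hn : 2 ≤ n) (hk : 1 ≤ k) {μ : Measure (Cfg d n k)}
    [IsFiniteMeasure μ] (hμ : Unif μ) (m : V d) :
    ∃ T ∈ RFAfixset d n k, AlphaIs μ ⇑T fun i => (m i : ℝ) / k := by
  let w : Fin k → V d := fun q => if q = ⟨0, hk⟩ then m else 0
  let T : Equiv.Perm (Cfg d n k) :=
    ⟨fun c => (sh c.1 (- w c.2), c.2), fun c => (sh c.1 (w c.2), c.2),
      fun c => Prod.ext (by funext t; simp [sh]) rfl,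
      fun c => Prod.ext (by funext t; simp [sh]) rfl⟩
  have hTt : ∀ c t, (T c).1 t = c.1 (t - w c.2) := by
    intro c t; rw [sub_eq_add_neg]; rfl
  have h : TapeDefinedBy ∅ ∅ (fun x q => (x, q, w q)) ⇑T := by
    refine ⟨fun x x' q _ => by simp, fun x q => ⟨rfl, fun t => ?_⟩⟩
    rw [hTt]; simp
  refine ⟨T, ⟨⟨_, _, _, h⟩, fun c => ⟨_, hTt c⟩⟩, _, tm_shift h, fun i => ?_⟩
  rw [rfa_int hμ hk (unif_mass hn hk hμ) ⟨0, by omega⟩ T (fun c => w c.2) ∅ ?_ hTt i]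
  · congr 2
    have : ∀ q, w q i = if q = ⟨0, hk⟩ then m i else 0 := by
      intro q; simp only [w]; split_ifs <;> rfl
    simp [this]
  · intro c c' hc _
    simp only [hc, true_and]
    exact hc

lemma carry (hd : 1 ≤ d) (hn : 2 ≤ n) (hk : 1 ≤ k) {μ : Measure (Cfg d n k)}
    [IsFiniteMeasure μ] (hμ : Unif μ) :
    ∃ T : Equiv.Perm (Cfg d n k), IsTMfix ⇑T ∧ ∃ r, AlphaIs μ ⇑T r ∧
      r ⟨0, hd⟩ = 1 / ((k : ℝ) * n) := by
  classical
  let q0 : Fin k := ⟨0, hk⟩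
  let o : Fin n := ⟨1, by omega⟩
  let e : V d := Pi.single ⟨0, hd⟩ 1
  let A : Cfg d n k → Prop := fun c => c.2 = q0 ∧ c.1 0 = o
  let S : Equiv.Perm (V d) := Equiv.swap 0 (-e)
  let T : Equiv.Perm (Cfg d n k) :=
    { toFun := fun c => if A c then (fun t => c.1 (S (t - e)), c.2) else c
      invFun := fun c => if A c then (fun t => c.1 (S t + e), c.2) else c
      left_inv := by
        intro c
        by_cases h : A c
        · have h' : A (fun t => c.1 (S (t - e)), c.2) := by
            refine ⟨h.1, ?_⟩
            simp only [S, zero_sub, Equiv.swap_apply_right]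
            exact h.2
          simp only [if_pos h, if_pos h']
          simp [S]
        · simp only [if_neg h]
      right_inv := by
        intro c
        by_cases h : A c
        · have h' : A (fun t => c.1 (S t + e), c.2) := by
            refine ⟨h.1, ?_⟩
            simp only [S, Equiv.swap_apply_left, neg_add_cancel]
            exact h.2
          simp only [if_pos h, if_pos h']
          simp [S]
        · simp only [if_neg h] }
  have hT : ∀ c, T c = if A c then (fun t => c.1 (S (t - e)), c.2) else c := fun _ => rfl
  let f : (V d → Fin n) → Fin k → (V d → Fin n) × Fin k × V d := fun x q =>
    if A (x, q) then (fun t => x (S t), q, e) else (x, q, 0)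
  have hS : ∀ t, t ∉ ({0, -e} : Finset (V d)) → S t = t := by
    intro t ht
    simp only [Finset.mem_insert, Finset.mem_singleton, not_or] at ht
    exact Equiv.swap_apply_of_ne_of_ne ht.1 ht.2
  have hS' : ∀ t, t ∈ ({0, -e} : Finset (V d)) → S t ∈ ({0, -e} : Finset (V d)) := by
    intro t ht
    simp only [Finset.mem_insert, Finset.mem_singleton] at ht
    rcases ht with rfl | rfl <;> simp [S]
  have h : TapeDefinedBy {0, -e} {0, -e} f ⇑T := by
    constructor
    · intro x x' q hx
      have hA : A (x, q) ↔ A (x', q) := by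
        simp only [A]
        rw [hx 0 (by simp)]
      by_cases h : A (x, q)
      · simp only [f, if_pos h, if_pos (hA.1 h), and_true]
        exact fun v hv => hx _ (hS' v hv)
      · simp only [f, if_neg h, if_neg (fun h' => h (hA.2 h')), and_true]
        exact fun v hv => hx _ hv
    · intro x q
      rw [hT]
      by_cases h : A (x, q)
      · simp only [f, if_pos h, true_and]
        intro t
        split_ifs with h1
        · rfl
        · rw [hS _ h1]
      · simp only [f, if_neg h, true_and]
        intro t
        simp
  refine ⟨T, ⟨_, _, _, h⟩, _, ⟨_, tm_shift h, fun i => rfl⟩, ?_⟩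
  have hi : ∀ c : Cfg d n k, (((f c.1 c.2).2.2 ⟨0, hd⟩ : ℤ) : ℝ) =
      (cyl {0} (fun _ => o) q0).indicator (fun _ => (1 : ℝ)) c := by
    intro c
    have hA : c ∈ cyl {0} (fun _ => o) q0 ↔ A c := by simp [cyl, A]
    by_cases h : A c
    · rw [Set.indicator_of_mem (hA.2 h)]
      simp only [f]
      rw [if_pos h]
      simp [e]
    · rw [Set.indicator_of_notMem (fun h' => h (hA.1 h'))]
      simp only [f]
      rw [if_neg h]
      simp
  simp only [hi]
  rw [integral_indicator_const _ (isOpen_cyl _ _ _).measurableSet]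
  have := hμ {0} (fun _ => o) q0
  rw [Measure.real, cyl, this]
  simp

end helpers

open MeasureTheory in
/-- `α(RFA(ℤ^d,n,k)) = α(EL(ℤ^d,n,k)) = ℚ_k^d` where `ℚ_k = (1/k)ℤ`; in particular
`EL(ℤ^d,n,k)` is a proper subgroup of `RTM(ℤ^d,n,k)`.  Here `μ` is the uniform
measure, characterized on cylinders. -/
theorem alpha_image_rfa_el (d n k : ℕ) (hd : 1 ≤ d) (hn : 2 ≤ n) (hk : 1 ≤ k)
    (μ : Measure (Cfg d n k))
    (hμ : ∀ (F : Finset (V d)) (p : V d → Fin n) (q : Fin k),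
      μ {c : Cfg d n k | c.2 = q ∧ ∀ v ∈ F, c.1 v = p v} =
        1 / ((k : ENNReal) * (n : ENNReal) ^ F.card)) :
    ({r : Fin d → ℝ | ∃ π ∈ RFAfixgrp d n k, AlphaIs μ ⇑π r} =
        {r : Fin d → ℝ | ∃ π ∈ ELfixgrp d n k, AlphaIs μ ⇑π r}) ∧
    ({r : Fin d → ℝ | ∃ π ∈ RFAfixgrp d n k, AlphaIs μ ⇑π r} =
        {r : Fin d → ℝ | ∀ i : Fin d, ∃ m : ℤ, r i = (m : ℝ) / (k : ℝ)}) ∧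
    ELfixgrp d n k < RTMfixgrp d n k := by

  have hfin := unif_fin hn hk hμ
  have hle : RFAfixgrp d n k ≤ ELfixgrp d n k := Subgroup.closure_mono Set.subset_union_left
  have hQ : {r : Fin d → ℝ | ∀ i : Fin d, ∃ m : ℤ, r i = (m : ℝ) / (k : ℝ)} ⊆
      {r : Fin d → ℝ | ∃ π ∈ RFAfixgrp d n k, AlphaIs μ ⇑π r} := by
    intro r hr
    choose m hm using hr
    obtain ⟨T, hT, hα⟩ := rfa_attain hd hn hk hμ m
    refine ⟨T, Subgroup.subset_closure hT, ?_⟩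
    rwa [← funext hm] at hα
  have hE : {r : Fin d → ℝ | ∃ π ∈ ELfixgrp d n k, AlphaIs μ ⇑π r} ⊆
      {r : Fin d → ℝ | ∀ i : Fin d, ∃ m : ℤ, r i = (m : ℝ) / (k : ℝ)} := by
    rintro r ⟨π, hπ, hr⟩ i
    exact el_alpha hd hn hk hμ hπ hr i
  have hRE : {r : Fin d → ℝ | ∃ π ∈ RFAfixgrp d n k, AlphaIs μ ⇑π r} ⊆
      {r : Fin d → ℝ | ∃ π ∈ ELfixgrp d n k, AlphaIs μ ⇑π r} := by
    rintro r ⟨π, hπ, hr⟩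
    exact ⟨π, hle hπ, hr⟩
  refine ⟨hRE.antisymm (hE.trans hQ), (hRE.trans hE).antisymm hQ, lt_of_le_of_ne ?_ ?_⟩
  · apply Subgroup.closure_mono
    rintro π (h | h)
    · exact h.1
    · exact h.1
  · intro heq
    obtain ⟨T, hT, r, hα, hr⟩ := carry hd hn hk hμ
    have hmem : T ∈ ELfixgrp d n k := by
      rw [heq]; exact Subgroup.subset_closure hT
    obtain ⟨m, hm⟩ := el_alpha hd hn hk hμ hmem hα ⟨0, hd⟩
    rw [hr] at hm
    have hk' : (k : ℝ) ≠ 0 := by exact_mod_cast (by omega : k ≠ 0)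
    have hn' : (n : ℝ) ≠ 0 := by exact_mod_cast (by omega : n ≠ 0)
    have h1 : (m : ℝ) * n = 1 := by
      field_simp at hm
      linarith
    have h2 : m * (n : ℤ) = 1 := by exact_mod_cast h1
    have h3 : (n : ℤ) ∣ 1 := ⟨m, by linarith⟩
    have h4 := Int.le_of_dvd one_pos h3
    omega
end

section
/- For all d, n, k ≥ 1, the group RTM(ℤ^d,n,k) is locally embeddable in finite groups (LEF). -/
open Function

/-- A head configuration is valid if it carries at most one head. -/
def headOk {d k : ℕ} (y : V d → Option (Fin k)) : Prop :=
  ∀ u v : V d, (y u).isSome → (y v).isSome → u = v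

/-- The space `X_{n,k}`: a tape in `Σ^{ℤ^d}` together with at most one head
carrying a state in `Q = Fin k`. -/
abbrev X (d n k : ℕ) : Type :=
  { c : (V d → Fin n) × (V d → Option (Fin k)) // headOk c.2 }

/-- `DefinedBy F F' f T` : `T` is the moving-head Turing machine defined by the
local rule `f`, reading the tape on the window `F`, writing on the window `F'`,
changing the state and moving the head. -/
def DefinedBy {d n k : ℕ} (F F' : Finset (V d))
    (f : (V d → Fin n) → Fin k → (V d → Fin n) × Fin k × V d)
    (T : X d n k → X d n k) : Prop :=
  -- `f` only depends on the restriction of the tape to `F`, and only the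
  -- restriction of its tape output to `F'` matters:
  (∀ x x' q, (∀ v ∈ F, x v = x' v) →
      (∀ v ∈ F', (f x q).1 v = (f x' q).1 v) ∧ (f x q).2 = (f x' q).2) ∧
  -- a configuration with no head is fixed:
  (∀ c : X d n k, (∀ v, c.val.2 v = none) → T c = c) ∧
  -- if the head is at `v` in state `q`, apply the local rule there:
  (∀ (c : X d n k) (v : V d) (q : Fin k), c.val.2 v = some q →
    (∀ t, (T c).val.1 t =
      if t - v ∈ F' then (f (fun u => c.val.1 (u + v)) q).1 (t - v) else c.val.1 t) ∧
    (∀ t, (T c).val.2 t =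
      if t = v + (f (fun u => c.val.1 (u + v)) q).2.2
      then some (f (fun u => c.val.1 (u + v)) q).2.1 else none))

/-- A moving-head `(d,n,k)`-Turing machine. -/
def IsTM {d n k : ℕ} (T : X d n k → X d n k) : Prop :=
  ∃ F F' f, DefinedBy F F' f T

/-- A reversible moving-head Turing machine: a Turing machine admitting a
Turing machine inverse. -/
def IsRTM {d n k : ℕ} (T : X d n k → X d n k) : Prop :=
  IsTM T ∧ ∃ S : X d n k → X d n k, IsTM S ∧ S ∘ T = id ∧ T ∘ S = id

/-- The set of reversible Turing machines, viewed as permutations of `X_{n,k}`. -/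
def RTMset (d n k : ℕ) : Set (Equiv.Perm (X d n k)) :=
  {π | IsTM (⇑π) ∧ IsTM (⇑π.symm)}

/-- The group `RTM(ℤ^d,n,k)` of reversible Turing machines (a subgroup of the
permutation group of `X_{n,k}`; the set of reversible Turing machines is closed
under composition and inversion, so it coincides with the subgroup it generates). -/
def RTMgrp (d n k : ℕ) : Subgroup (Equiv.Perm (X d n k)) :=
  Subgroup.closure (RTMset d n k)

/-- Local permutations: reversible Turing machines that never move the head. -/
def LPset (d n k : ℕ) : Set (Equiv.Perm (X d n k)) :=
  {π | π ∈ RTMset d n k ∧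
    ∀ (c : X d n k) (v : V d), ((π c).val.2 v).isSome = (c.val.2 v).isSome}

/-- The group `LP(ℤ^d,n,k)` of local permutations. -/
def LPgrp (d n k : ℕ) : Subgroup (Equiv.Perm (X d n k)) :=
  Subgroup.closure (LPset d n k)

/-- Reversible finite-state automata: reversible Turing machines that never
change the tape. -/
def RFAset (d n k : ℕ) : Set (Equiv.Perm (X d n k)) :=
  {π | π ∈ RTMset d n k ∧ ∀ c : X d n k, (π c).val.1 = c.val.1}

/-- The group `RFA(ℤ^d,n,k)` of reversible finite-state automata. -/
def RFAgrp (d n k : ℕ) : Subgroup (Equiv.Perm (X d n k)) :=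
  Subgroup.closure (RFAset d n k)

/-- State-permutations: reversible machines that never move the head and never
change the tape, only permuting the state as a function of the tape. -/
def SPset (d n k : ℕ) : Set (Equiv.Perm (X d n k)) :=
  {π | π ∈ RTMset d n k ∧ (∀ c : X d n k, (π c).val.1 = c.val.1) ∧
    ∀ (c : X d n k) (v : V d), ((π c).val.2 v).isSome = (c.val.2 v).isSome}

/-- The group `SP(ℤ^d,n,k)` of state-permutations. -/
def SPgrp (d n k : ℕ) : Subgroup (Equiv.Perm (X d n k)) :=
  Subgroup.closure (SPset d n k)

/-- The machines `T_u` that move the head by `u ∈ ℤ^d` without changing the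
tape or the state. -/
def Shiftset (d n k : ℕ) : Set (Equiv.Perm (X d n k)) :=
  {π | ∃ u : V d, ∀ c : X d n k,
    (π c).val.1 = c.val.1 ∧ ∀ t, (π c).val.2 t = c.val.2 (t - u)}

/-- The group `Shift(ℤ^d,n,k)`. -/
def Shiftgrp (d n k : ℕ) : Subgroup (Equiv.Perm (X d n k)) :=
  Subgroup.closure (Shiftset d n k)

/-- The group `OB(ℤ^d,n,k) = ⟨Shift(ℤ^d,n,k), LP(ℤ^d,n,k)⟩` of oblivious Turing
machines. -/
def OBgrp (d n k : ℕ) : Subgroup (Equiv.Perm (X d n k)) :=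
  Subgroup.closure (Shiftset d n k ∪ LPset d n k)

/-- The group `EL(ℤ^d,n,k) = ⟨RFA(ℤ^d,n,k), LP(ℤ^d,n,k)⟩` of elementary Turing
machines. -/
def ELgrp (d n k : ℕ) : Subgroup (Equiv.Perm (X d n k)) :=
  Subgroup.closure (RFAset d n k ∪ LPset d n k)

open scoped Pointwise in
/-- A group `G` is locally embeddable in finite groups (LEF) if for every finite
subset `M ⊆ G` there are a finite group `H` and a map `φ : G → H` which is injective
on `M ∪ M·M` and satisfies `φ(x)φ(y) = φ(xy)` for all `x, y ∈ M`. -/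
def IsLEF (G : Type*) [Group G] : Prop :=
  ∀ M : Set G, M.Finite →
    ∃ (H : Type) (_ : Group H) (_ : Finite H) (φ : G → H),
      Set.InjOn φ (M ∪ M * M) ∧ ∀ x ∈ M, ∀ y ∈ M, φ (x * y) = φ x * φ y

namespace RTMLEF

/-- local rules at the origin -/
abbrev Loc (A : Type) (n k : ℕ) : Type :=
  (A → Fin n) → Fin k → (A → Fin n) × Fin k × A

/-- headed configurations -/
abbrev Conf (A : Type) (n k : ℕ) : Type := (A → Fin n) × A × Fin k

def act {A : Type} [AddCommGroup A] {n k : ℕ} (g : Loc A n k) (c : Conf A n k) : Conf A n k :=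
  (fun t => (g (fun u => c.1 (u + c.2.1)) c.2.2).1 (t - c.2.1),
   c.2.1 + (g (fun u => c.1 (u + c.2.1)) c.2.2).2.2,
   (g (fun u => c.1 (u + c.2.1)) c.2.2).2.1)

def star {A : Type} [AddCommGroup A] {n k : ℕ} (g h : Loc A n k) : Loc A n k := fun x q =>
  (fun t => (g (fun a => (h x q).1 (a + (h x q).2.2)) (h x q).2.1).1 (t - (h x q).2.2),
   (g (fun a => (h x q).1 (a + (h x q).2.2)) (h x q).2.1).2.1,
   (h x q).2.2 + (g (fun a => (h x q).1 (a + (h x q).2.2)) (h x q).2.1).2.2)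

def one {A : Type} [AddCommGroup A] {n k : ℕ} : Loc A n k := fun x q => (x, q, 0)

theorem act_star {A : Type} [AddCommGroup A] {n k : ℕ} (g h : Loc A n k) (c : Conf A n k) :
    act (star g h) c = act g (act h c) := by
  obtain ⟨x, v, q⟩ := c
  have key : ∀ (a u : A), a + (v + u) - v = a + u := fun a u => by abel
  have key2 : ∀ (t u : A), t - (v + u) = t - v - u := fun a u => by abel
  simp only [act, star, key, key2, add_assoc]

theorem act_one {A : Type} [AddCommGroup A] {n k : ℕ} (c : Conf A n k) :
    act one c = c := by
  simp [act, one]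

theorem act_inj {A : Type} [AddCommGroup A] {n k : ℕ} {g h : Loc A n k}
    (H : ∀ c, act g c = act h c) : g = h := by
  funext x q
  have := H (x, 0, q)
  simp only [act, add_zero, sub_zero, zero_add, Prod.mk.injEq] at this
  obtain ⟨h1, h2, h3⟩ := this
  exact Prod.ext h1 (Prod.ext h3 h2)

def inB {d : ℕ} (r : ℕ) (t : V d) : Prop := ∀ i, |t i| ≤ (r : ℤ)

structure Rad {d n k : ℕ} (r : ℕ) (g : Loc (V d) n k) : Prop where
  dep : ∀ x x' q, (∀ t, inB r t → x t = x' t) →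
    (∀ t, inB r t → (g x q).1 t = (g x' q).1 t) ∧ (g x q).2 = (g x' q).2
  out : ∀ x q t, ¬ inB r t → (g x q).1 t = x t
  mov : ∀ x q, inB r (g x q).2.2

theorem inB.mono {d r r' : ℕ} {t : V d} (h : inB r t) (hr : r ≤ r') : inB r' t :=
  fun i => (h i).trans (by exact_mod_cast hr)

theorem inB.add {d r r' : ℕ} {t u : V d} (h : inB r t) (h' : inB r' u) : inB (r + r') (t + u) := by
  intro i
  have := abs_add_le (t i) (u i)
  have := h i
  have := h' i
  simp only [Pi.add_apply]; push_cast; linarith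

theorem Rad.mono {d n k r r' : ℕ} {g : Loc (V d) n k} (h : Rad r g) (hr : r ≤ r') : Rad r' g where
  dep x x' q hx := by
    have := h.dep x x' q (fun t ht => hx t (ht.mono hr))
    refine ⟨fun t ht => ?_, this.2⟩
    by_cases h1 : inB r t
    · exact this.1 t h1
    · rw [h.out _ _ _ h1, h.out _ _ _ h1, hx t ht]
  out x q t ht := h.out x q t (fun h' => ht (h'.mono hr))
  mov x q := (h.mov x q).mono hr

theorem Rad.one {d n k : ℕ} : Rad 0 (one : Loc (V d) n k) where
  dep x x' q hx := ⟨fun t ht => hx t ht, rfl⟩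
  out x q t ht := rfl
  mov x q := by intro i; simp [RTMLEF.one]

theorem Rad.star {d n k r : ℕ} {g h : Loc (V d) n k} (hg : Rad r g) (hh : Rad r h) :
    Rad (r + r) (star g h) where
  dep x x' q hx := by
    have hr : r ≤ r + r := by omega
    have e1 := (hh.mono hr).dep x x' q hx
    have hm := hh.mov x q
    simp only [RTMLEF.star]
    rw [← e1.2]
    have e2 := hg.dep (fun a => (h x q).1 (a + (h x q).2.2))
      (fun a => (h x' q).1 (a + (h x q).2.2)) (h x q).2.1 (fun t ht => e1.1 _ (ht.add hm))
    refine ⟨fun t ht => ?_, by rw [e2.2]⟩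
    by_cases h1 : inB r (t - (h x q).2.2)
    · exact e2.1 _ h1
    · rw [hg.out _ _ _ h1, hg.out _ _ _ h1, sub_add_cancel]
      exact e1.1 _ ht
  out x q t ht := by
    have hm := hh.mov x q
    simp only [RTMLEF.star]
    rw [hg.out, sub_add_cancel, hh.out]
    · exact fun h' => ht (h'.mono (by omega))
    · intro h'
      have := h'.add hm
      rw [sub_add_cancel] at this
      exact ht this
  mov x q := (hh.mov x q).add (hg.mov _ _)

/-- embedding of headed configurations -/
def emb {d n k : ℕ} (c : Conf (V d) n k) : X d n k :=
  ⟨(c.1, fun t => if t = c.2.1 then some c.2.2 else none), by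
    intro u v hu hv
    by_cases h1 : u = c.2.1 <;> by_cases h2 : v = c.2.1 <;> simp_all⟩

theorem emb_inj {d n k : ℕ} : Injective (emb : Conf (V d) n k → X d n k) := by
  rintro ⟨x, v, q⟩ ⟨x', v', q'⟩ h
  simp only [emb, Subtype.mk.injEq, Prod.mk.injEq] at h
  obtain ⟨h1, h2⟩ := h
  have := congrFun h2 v
  simp only [if_true] at this
  by_cases hv : v = v' <;> simp_all

theorem cases_X {d n k : ℕ} (c : X d n k) :
    (∀ v, c.val.2 v = none) ∨ ∃ c', emb c' = c := by
  by_cases h : ∀ v, c.val.2 v = none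
  · exact Or.inl h
  · right
    push Not at h
    obtain ⟨v, hv⟩ := h
    obtain ⟨q, hq⟩ := Option.ne_none_iff_exists'.1 hv
    refine ⟨(c.val.1, v, q), ?_⟩
    apply Subtype.ext
    refine Prod.ext rfl ?_
    funext t
    simp only [emb]
    split_ifs with ht
    · rw [ht, hq]
    · by_contra hne
      exact ht (c.2 t v (Option.isSome_iff_ne_none.2 (fun h => hne h.symm)) (by simp [hq]))

structure Rep {d n k : ℕ} (T : X d n k → X d n k) (g : Loc (V d) n k) : Prop where
  fix : ∀ c : X d n k, (∀ v, c.val.2 v = none) → T c = c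
  app : ∀ c, T (emb c) = emb (act g c)

theorem Rep.unique {d n k : ℕ} {T : X d n k → X d n k} {g h : Loc (V d) n k}
    (hg : Rep T g) (hh : Rep T h) : g = h :=
  act_inj fun c => emb_inj (by rw [← hg.app, hh.app])

theorem Rep.faithful {d n k : ℕ} {T S : X d n k → X d n k} {g : Loc (V d) n k}
    (hT : Rep T g) (hS : Rep S g) : T = S := by
  funext c
  rcases cases_X c with h | ⟨c, rfl⟩
  · rw [hT.fix c h, hS.fix c h]
  · rw [hT.app, hS.app]

theorem Rep.star {d n k : ℕ} {T S : X d n k → X d n k} {g h : Loc (V d) n k}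
    (hT : Rep T g) (hS : Rep S h) : Rep (T ∘ S) (star g h) where
  fix c hc := by simp [hS.fix c hc, hT.fix c hc]
  app c := by simp [hS.app, hT.app, act_star]

theorem Rep.one {d n k : ℕ} : Rep (id : X d n k → X d n k) one where
  fix c hc := rfl
  app c := by simp [act_one]

theorem finset_bound {d : ℕ} (F : Finset (V d)) : ∃ r : ℕ, ∀ t ∈ F, inB r t := by
  refine ⟨F.sup fun t => Finset.univ.sup fun i => (t i).natAbs, fun t ht i => ?_⟩
  have h1 : (t i).natAbs ≤ Finset.univ.sup fun i => (t i).natAbs :=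
    Finset.le_sup (f := fun i => (t i).natAbs) (Finset.mem_univ i)
  have h2 := Finset.le_sup (f := fun t : V d => Finset.univ.sup fun i => (t i).natAbs) ht
  have h3 := h1.trans h2
  rw [Int.abs_eq_natAbs]
  exact_mod_cast h3

theorem exists_rep {d n k : ℕ} {T : X d n k → X d n k} (h : IsTM T) :
    ∃ g, Rep T g ∧ ∃ r, Rad r g := by
  classical
  obtain ⟨F, F', f, hf, hfix, happ⟩ := h
  refine ⟨fun x q => (fun t => if t ∈ F' then (f x q).1 t else x t, (f x q).2.1, (f x q).2.2),
    ⟨hfix, ?_⟩, ?_⟩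
  · rintro ⟨x, v, q⟩
    obtain ⟨h1, h2⟩ := happ (emb (x, v, q)) v q (by simp [emb])
    apply Subtype.ext
    refine Prod.ext (funext fun t => ?_) (funext fun t => ?_)
    · rw [h1]; simp [emb, act]
    · rw [h2]; simp [emb, act]
  · -- moves are bounded
    have hfin : (Set.range fun p : (V d → Fin n) × Fin k => (f p.1 p.2).2.2).Finite := by
      have : (Set.range fun p : (V d → Fin n) × Fin k => (f p.1 p.2).2.2) ⊆
          Set.range (fun p : (F → Fin n) × Fin k =>
            if h : ∃ x : V d → Fin n, (fun t : F => x t) = p.1 then (f h.choose p.2).2.2 else 0) := by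
        rintro _ ⟨⟨x, q⟩, rfl⟩
        refine ⟨(fun t : F => x t, q), ?_⟩
        have hex : ∃ x' : V d → Fin n, (fun t : F => x' t) = fun t : F => x t := ⟨x, rfl⟩
        simp only
        rw [dif_pos hex]
        have := (hf hex.choose x q (fun v hv => congrFun hex.choose_spec ⟨v, hv⟩)).2
        rw [this]
      exact (Set.finite_range _).subset this
    obtain ⟨r1, hr1⟩ := finset_bound F
    obtain ⟨r2, hr2⟩ := finset_bound F'
    obtain ⟨r3, hr3⟩ := finset_bound hfin.toFinset
    refine ⟨r1 + r2 + r3, ?_, ?_, ?_⟩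
    · intro x x' q hx
      have := hf x x' q (fun v hv => hx v ((hr1 v hv).mono (by omega)))
      refine ⟨fun t ht => ?_, this.2⟩
      simp only
      split_ifs with h
      · exact this.1 t h
      · exact hx t ht
    · intro x q t ht
      simp only
      rw [if_neg]
      exact fun h => ht ((hr2 t h).mono (by omega))
    · intro x q
      exact (hr3 _ (by simp)).mono (by omega)

theorem exists_rep_grp {d n k : ℕ} (π : RTMgrp d n k) :
    ∃ g, Rep (⇑(π : Equiv.Perm (X d n k))) g ∧ ∃ r, Rad r g := by
  obtain ⟨π, hπ⟩ := π
  suffices H : (∃ g, Rep (⇑π) g ∧ ∃ r, Rad r g) ∧ (∃ g, Rep (⇑π⁻¹) g ∧ ∃ r, Rad r g) from H.1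
  have mulc : ∀ a b : Equiv.Perm (X d n k), (∃ g, Rep (⇑a) g ∧ ∃ r, Rad r g) →
      (∃ g, Rep (⇑b) g ∧ ∃ r, Rad r g) → (∃ g, Rep (⇑(a * b)) g ∧ ∃ r, Rad r g) := by
    rintro a b ⟨g, hg, r, hr⟩ ⟨h, hh, s, hs⟩
    exact ⟨star g h, hg.star hh, _, (hr.mono (le_max_left r s)).star (hs.mono (le_max_right r s))⟩
  induction hπ using Subgroup.closure_induction with
  | mem x hx => exact ⟨exists_rep hx.1, exists_rep hx.2⟩
  | one => exact ⟨⟨one, Rep.one, 0, Rad.one⟩, ⟨one, by rw [inv_one]; exact Rep.one, 0, Rad.one⟩⟩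
  | mul a b _ _ ha hb =>
    refine ⟨mulc a b ha.1 hb.1, ?_⟩
    rw [mul_inv_rev]
    exact mulc _ _ hb.2 ha.2
  | inv a _ ha => exact ⟨ha.2, by rw [inv_inv]; exact ha.1⟩

/-! torus -/

abbrev Tor (d m : ℕ) : Type := Fin d → ZMod m

def pr {d : ℕ} (m : ℕ) (t : V d) : Tor d m := fun i => (t i : ZMod m)

def sec {d m : ℕ} (w : Tor d m) : V d := fun i => (w i).valMinAbs

theorem pr_sec {d m : ℕ} (w : Tor d m) : pr m (sec w) = w := by
  funext i; simp [pr, sec]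

theorem pr_add {d m : ℕ} (a b : V d) : pr m (a + b) = pr m a + pr m b := by
  funext i; simp [pr]

theorem pr_zero {d m : ℕ} : pr m (0 : V d) = 0 := by
  funext i; simp [pr]

theorem sec_pr {d m r : ℕ} [NeZero m] (hm : 2 * r < m) {t : V d} (ht : inB r t) :
    sec (pr m t) = t := by
  funext i
  simp only [sec, pr]
  rw [ZMod.valMinAbs_spec]
  have := abs_le.1 (ht i)
  refine ⟨rfl, ?_, ?_⟩ <;> omega

def tor {d n k : ℕ} (m : ℕ) (g : Loc (V d) n k) : Loc (Tor d m) n k := fun x q =>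
  (fun w => (g (fun t => x (pr m t)) q).1 (sec w), (g (fun t => x (pr m t)) q).2.1,
    pr m (g (fun t => x (pr m t)) q).2.2)

theorem tor_one {d n k m : ℕ} : tor m (one : Loc (V d) n k) = one := by
  funext x q
  simp [tor, one, pr_sec, pr_zero]

theorem tor_star {d n k m r : ℕ} [NeZero m] (hm : 2 * (r + r) < m) {g h : Loc (V d) n k}
    (hg : Rad r g) (hh : Rad r h) : tor m (star g h) = star (tor m g) (tor m h) := by
  funext x q
  simp only [tor, star]
  generalize hy : h (fun t => x (pr m t)) q = Y
  have hu : inB r Y.2.2 := hy ▸ hh.mov _ _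
  obtain ⟨y, q', u⟩ := Y
  simp only at hu ⊢
  have e := hg.dep (fun a => y (a + u)) (fun t => y (sec (pr m t + pr m u))) q' (fun t ht => by
    rw [← pr_add, sec_pr hm (ht.add hu)])
  rw [← e.2, pr_add]
  refine Prod.ext (funext fun w => ?_) rfl
  simp only
  by_cases h1 : inB r (sec w - u)
  · have : sec (w - pr m u) = sec w - u := by
      have h2 : w - pr m u = pr m (sec w - u) := by
        rw [sub_eq_iff_eq_add, ← pr_add, sub_add_cancel, pr_sec]
      rw [h2, sec_pr (by omega) h1]
    rw [this]
    exact e.1 _ h1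
  · have h2 : ¬ inB r (sec (w - pr m u)) := by
      intro h3
      apply h1
      have h4 : sec w = sec (w - pr m u) + u := by
        conv_lhs => rw [← sub_add_cancel w (pr m u)]
        conv_lhs => rw [← pr_sec (w - pr m u), ← pr_add]
        exact sec_pr hm (h3.add hu)
      rw [h4, add_sub_cancel_right]
      exact h3
    rw [hg.out _ _ _ h1, hg.out _ _ _ h2, sub_add_cancel, pr_sec, sub_add_cancel]

theorem tor_inj {d n k m r : ℕ} [NeZero m] (hm : 2 * (r + r) < m) {g h : Loc (V d) n k}
    (hg : Rad r g) (hh : Rad r h) (H : tor m g = tor m h) : g = h := by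
  funext x q
  have hm' : 2 * r < m := by omega
  have H1 := congrFun (congrFun H (fun w => x (sec w))) q
  simp only [tor, Prod.mk.injEq] at H1
  obtain ⟨h1, h2, h3⟩ := H1
  have eg := hg.dep (fun t => x (sec (pr m t))) x q (fun t ht => by rw [sec_pr hm' ht])
  have eh := hh.dep (fun t => x (sec (pr m t))) x q (fun t ht => by rw [sec_pr hm' ht])
  rw [eg.2, eh.2] at h2 h3
  refine Prod.ext (funext fun t => ?_) (Prod.ext h2 ?_)
  · by_cases ht : inB r t
    · rw [← eg.1 t ht, ← eh.1 t ht]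
      have := congrFun h1 (pr m t)
      rwa [sec_pr hm' ht] at this
    · rw [hg.out _ _ _ ht, hh.out _ _ _ ht]
  · have := congrArg sec h3
    rwa [sec_pr hm' (hg.mov _ _), sec_pr hm' (hh.mov _ _)] at this

end RTMLEF

open scoped Pointwise in
open RTMLEF in
theorem isLEF_aux (d n k : ℕ) : IsLEF (RTMgrp d n k) := by
  classical
  intro M hM
  choose G hG rad hrad using fun π : RTMgrp d n k => exists_rep_grp π
  have hmul : ∀ a b, G (a * b) = star (G a) (G b) := fun a b =>
    (hG (a * b)).unique ((hG a).star (hG b))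
  have hone : G 1 = one := (hG 1).unique Rep.one
  have hfin : (M ∪ M * M ∪ M⁻¹).Finite := (hM.union (hM.mul hM)).union hM.inv
  set R := hfin.toFinset.sup rad with hR
  have hRad : ∀ a ∈ M ∪ M * M ∪ M⁻¹, Rad R (G a) := fun a ha =>
    (hrad a).mono (Finset.le_sup (f := rad) (hfin.mem_toFinset.2 ha))
  let m := 2 * (R + R) + 1
  have hm : 2 * (R + R) < m := Nat.lt_succ_self _
  haveI : NeZero m := ⟨by omega⟩
  let ψ : RTMgrp d n k → Conf (Tor d m) n k → Conf (Tor d m) n k := fun a => act (tor m (G a))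
  have hψ : ∀ a b, Rad R (G a) → Rad R (G b) → ψ (a * b) = ψ a ∘ ψ b := by
    intro a b ha hb
    funext c
    simp only [ψ, hmul, tor_star hm ha hb, act_star, comp_apply]
  have hψ1 : ψ 1 = id := by
    funext c
    simp only [ψ, hone, tor_one, act_one, id]
  have hM1 : ∀ a ∈ M, Rad R (G a) := fun a ha => hRad a (Or.inl (Or.inl ha))
  have hbij : ∀ a ∈ M, Bijective (ψ a) := by
    intro a ha
    have hi : Rad R (G a⁻¹) := hRad _ (Or.inr (Set.inv_mem_inv.2 ha))
    refine bijective_iff_has_inverse.2 ⟨ψ a⁻¹, fun c => ?_, fun c => ?_⟩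
    · have := congrFun (hψ a⁻¹ a hi (hM1 a ha)) c
      rw [inv_mul_cancel, hψ1] at this
      exact this.symm
    · have := congrFun (hψ a a⁻¹ (hM1 a ha) hi) c
      rw [mul_inv_cancel, hψ1] at this
      exact this.symm
  have hbij2 : ∀ a ∈ M, ∀ b ∈ M, Bijective (ψ (a * b)) := by
    intro a ha b hb
    rw [hψ a b (hM1 a ha) (hM1 b hb)]
    exact (hbij a ha).comp (hbij b hb)
  let φ : RTMgrp d n k → Equiv.Perm (Conf (Tor d m) n k) := fun a =>
    if h : Bijective (ψ a) then Equiv.ofBijective (ψ a) h else 1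
  have hφ : ∀ a, Bijective (ψ a) → ⇑(φ a) = ψ a := by
    intro a ha
    simp only [φ, dif_pos ha]
    rfl
  refine ⟨Equiv.Perm (Conf (Tor d m) n k), inferInstance, inferInstance, φ, ?_, ?_⟩
  · have hb : ∀ a ∈ M ∪ M * M, Bijective (ψ a) := by
      rintro a (ha | ⟨x, hx, y, hy, rfl⟩)
      · exact hbij a ha
      · exact hbij2 x hx y hy
    intro a ha b hb' hab
    have h1 : ψ a = ψ b := by rw [← hφ a (hb a ha), ← hφ b (hb b hb'), hab]
    have h2 := act_inj (fun c => congrFun h1 c)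
    have h3 := tor_inj hm (hRad a (Or.inl ha)) (hRad b (Or.inl hb')) h2
    have h4 := hG a
    rw [h3] at h4
    exact Subtype.ext (DFunLike.coe_injective (h4.faithful (hG b)))
  · intro a ha b hb
    apply DFunLike.coe_injective
    rw [hφ _ (hbij2 a ha b hb), Equiv.Perm.coe_mul, hφ a (hbij a ha), hφ b (hbij b hb)]
    exact hψ a b (hM1 a ha) (hM1 b hb)

/-- The group `RTM(ℤ^d,n,k)` is LEF (hence sofic) for all `n, k, d`. -/
theorem rtm_lef (d n k : ℕ) (hd : 1 ≤ d) (hn : 1 ≤ n) (hk : 1 ≤ k) :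
    IsLEF (RTMgrp d n k) := by
  exact isLEF_aux d n k
end

section
/- Let n, k ≥ 1. The torsion problem of RFA(ℤ,n,k) is decidable: there is an algorithm which, given a local rule f defining a reversible finite-state machine T_f ∈ RFA(ℤ,n,k), decides whether T_f has finite order (i.e. whether T_f^m = id for some m ≥ 1). -/
open Function

/-- A head configuration on `ℤ` is valid if it carries at most one head. -/
def headOk1 {k : ℕ} (y : ℤ → Option (Fin k)) : Prop :=
  ∀ u v : ℤ, (y u).isSome → (y v).isSome → u = v

/-- The space `X_{n,k}` in dimension one: a tape in `Σ^ℤ` together with at most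
one head carrying a state in `Q = Fin k`. -/
abbrev X1 (n k : ℕ) : Type :=
  { c : (ℤ → Fin n) × (ℤ → Option (Fin k)) // headOk1 c.2 }

/-- `DefinedBy1 F F' f T` : `T` is the moving-head Turing machine on `ℤ` defined by
the local rule `f`, reading the tape on the window `F`, writing on the window `F'`,
changing the state and moving the head. -/
def DefinedBy1 {n k : ℕ} (F F' : Finset ℤ)
    (f : (ℤ → Fin n) → Fin k → (ℤ → Fin n) × Fin k × ℤ)
    (T : X1 n k → X1 n k) : Prop :=
  -- `f` only depends on the restriction of the tape to `F`, and only the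
  -- restriction of its tape output to `F'` matters:
  (∀ x x' q, (∀ v ∈ F, x v = x' v) →
      (∀ v ∈ F', (f x q).1 v = (f x' q).1 v) ∧ (f x q).2 = (f x' q).2) ∧
  -- a configuration with no head is fixed:
  (∀ c : X1 n k, (∀ v, c.val.2 v = none) → T c = c) ∧
  -- if the head is at `v` in state `q`, apply the local rule there:
  (∀ (c : X1 n k) (v : ℤ) (q : Fin k), c.val.2 v = some q →
    (∀ t, (T c).val.1 t =
      if t - v ∈ F' then (f (fun u => c.val.1 (u + v)) q).1 (t - v) else c.val.1 t) ∧
    (∀ t, (T c).val.2 t =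
      if t = v + (f (fun u => c.val.1 (u + v)) q).2.2
      then some (f (fun u => c.val.1 (u + v)) q).2.1 else none))

/-- A moving-head `(1,n,k)`-Turing machine. -/
def IsTM1 {n k : ℕ} (T : X1 n k → X1 n k) : Prop :=
  ∃ F F' f, DefinedBy1 F F' f T

/-- A reversible Turing machine: a Turing machine admitting a Turing machine
inverse. -/
def IsRTM1 {n k : ℕ} (T : X1 n k → X1 n k) : Prop :=
  IsTM1 T ∧ ∃ S : X1 n k → X1 n k, IsTM1 S ∧ S ∘ T = id ∧ T ∘ S = id

/-- A (finitely encodable) local rule for a one-dimensional finite-state machine: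
a radius `rad` and, for each tape pattern on the window `[-rad, rad]` (indexed by
`Fin (2·rad+1)`, offset `i ↦ i - rad`) and each state, a new state and a movement. -/
structure FARule (n k : ℕ) where
  rad : ℕ
  next : (Fin (2 * rad + 1) → Fin n) → Fin k → Fin k × ℤ

/-- Local rules are finite objects: they can be effectively encoded. -/
instance FARule.encodable (n k : ℕ) : Encodable (FARule n k) := by
  haveI : ∀ r : ℕ, Encodable ((Fin (2 * r + 1) → Fin n) → Fin k → Fin k × ℤ) := fun r =>
    haveI : Encodable (Fin k → Fin k × ℤ) := Encodable.fintypeArrowOfEncodable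
    Encodable.fintypeArrowOfEncodable
  exact Encodable.ofEquiv (Σ r : ℕ, ((Fin (2 * r + 1) → Fin n) → Fin k → Fin k × ℤ))
    ⟨fun R => ⟨R.rad, R.next⟩, fun p => ⟨p.1, p.2⟩, fun _ => rfl, fun _ => rfl⟩

/-- `T` is the finite-state machine defined by the rule `R`: the tape is never
changed, and a head at `v` in state `q` reading the window `[v-rad, v+rad]` moves
and changes its state according to `R`. -/
def FAApplies {n k : ℕ} (R : FARule n k) (T : X1 n k → X1 n k) : Prop :=
  (∀ c : X1 n k, (∀ v, c.val.2 v = none) → T c = c) ∧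
  ∀ (c : X1 n k) (v : ℤ) (q : Fin k), c.val.2 v = some q →
    (T c).val.1 = c.val.1 ∧
    ∀ t, (T c).val.2 t =
      if t = v + (R.next (fun i => c.val.1 (v + (i : ℤ) - (R.rad : ℤ))) q).2
      then some (R.next (fun i => c.val.1 (v + (i : ℤ) - (R.rad : ℤ))) q).1
      else none


namespace RFAAux
open Encodable

lemma encode_list_map {β : Type*} [Encodable β] (l : List β) :
    encode l = encode (l.map encode) := by
  induction l with
  | nil => rfl
  | cons a l ih => simp [ih]

lemma encode_finArrow {β : Type*} [Encodable β] {m : ℕ} (f : Fin m → β) :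
    @encode _ (finArrow) f = encode (List.ofFn (fun i => encode (f i))) := by
  have : @encode _ (finArrow) f = encode (List.ofFn f) := by
    have h : @encode _ (finArrow) f = encode ((Equiv.vectorEquivFin β m).symm f) := rfl
    rw [h]
    have h2 : encode ((Equiv.vectorEquivFin β m).symm f)
      = encode ((Equiv.vectorEquivFin β m).symm f).1 := rfl
    rw [h2]
    have h3 : ((Equiv.vectorEquivFin β m).symm f) = List.Vector.ofFn f := rfl
    rw [h3, ← List.Vector.toList_ofFn f]; rfl
  rw [this, encode_list_map, List.map_ofFn]; rfl

lemma encode_finPi {β : Type*} [Encodable β] {m : ℕ} (f : Fin m → β) :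
    @encode _ (finPi m (fun _ => β)) f =
      encode (List.ofFn (fun i : Fin m => Nat.pair i.val (encode (f i)))) := by
  have : @encode _ (finPi m (fun _ => β)) f =
    @encode _ finArrow (fun i : Fin m => (⟨i, f i⟩ : Σ _ : Fin m, β)) := rfl
  rw [this, encode_finArrow]; rfl

lemma encode_arrow {α β : Type*} [Encodable α] [Fintype α] [Encodable β] (f : α → β) :
    @encode _ (fintypeArrowOfEncodable) f =
      encode (List.ofFn (fun i : Fin (Fintype.card α) =>
        Nat.pair i.val (encode (f (fintypeEquivFin.symm i))))) := by
  have : @encode _ (fintypeArrowOfEncodable) f =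
    @encode _ (finPi _ (fun _ => β))
      (fun i : Fin (Fintype.card α) => (f (fintypeEquivFin.symm i))) := rfl
  rw [this, encode_finPi]

lemma equivFin_mono {α : Type*} [Encodable α] [Fintype α] (i j : Fin (Fintype.card α)) (h : i < j) :
    encode (fintypeEquivFin.symm i : α) < encode (fintypeEquivFin.symm j : α) := by
  have key : ∀ i : Fin (Fintype.card α), (fintypeEquivFin.symm i : α) =
      (sortedUniv α).get (i.cast (length_sortedUniv α).symm) := by
    intro i
    have : ∀ (N M : ℕ) (h : N = M) (h' : Fin N = Fin M) (i : Fin M),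
      (Equiv.cast h').symm i = i.cast h.symm := by
      intro N M h h' i; subst h; rfl
    unfold fintypeEquivFin
    rw [Equiv.symm_trans_apply, this _ _ (length_sortedUniv α)]
    rfl
  rw [key, key]
  have hs : (sortedUniv α).Pairwise (Encodable.encode' α ⁻¹'o (· ≤ ·)) := Finset.pairwise_sort _ _
  have hle := List.pairwise_iff_get.1 hs (i.cast (length_sortedUniv α).symm)
    (j.cast (length_sortedUniv α).symm) (by simpa using h)
  have hle' : encode ((sortedUniv α).get (i.cast (length_sortedUniv α).symm)) ≤
    encode ((sortedUniv α).get (j.cast (length_sortedUniv α).symm)) := hle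
  refine lt_of_le_of_ne hle' ?_
  intro he
  have := encode_injective he
  have := (List.nodup_iff_injective_get.1 (sortedUniv_nodup α)) this
  have h2 : i = j := by simpa [Fin.ext_iff] using this
  exact h.ne h2

lemma equivFin_val {α : Type*} [Encodable α] [Fintype α] (P : ℕ → Prop) [DecidablePred P]
    (hP : ∀ c, P c ↔ ∃ a : α, encode a = c) (a : α) :
    (fintypeEquivFin a).val = ((List.range (encode a)).filter (fun c => P c)).length := by
  classical
  have h1 : ((List.range (encode a)).filter (fun c => P c)).length =
      ((Finset.range (encode a)).filter P).card := rfl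
  rw [h1]
  have h2 : (Finset.range (encode a)).filter P =
      (Finset.univ.filter (fun i : Fin (Fintype.card α) => i < fintypeEquivFin a)).image
        (fun i => encode (fintypeEquivFin.symm i : α)) := by
    ext c
    simp only [Finset.mem_filter, Finset.mem_range, Finset.mem_image, Finset.mem_univ, true_and, hP]
    constructor
    · rintro ⟨h, b, rfl⟩
      refine ⟨fintypeEquivFin b, ?_, by simp⟩
      by_contra hc
      rcases (not_lt.1 hc).lt_or_eq with h3 | h3
      · have := equivFin_mono _ _ h3
        simp at this; omega
      · have := fintypeEquivFin.injective h3
        subst this; omega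
    · rintro ⟨i, hi, rfl⟩
      refine ⟨?_, _, rfl⟩
      have := equivFin_mono _ _ hi
      simpa using this
  rw [h2, Finset.card_image_of_injective]
  · have h3 : (Finset.univ.filter (fun i : Fin (Fintype.card α) => i < fintypeEquivFin a)) =
      Finset.Iio (fintypeEquivFin a) := by ext; simp
    rw [h3, Fin.card_Iio]
  · intro i j hij
    exact fintypeEquivFin.symm.injective (encode_injective hij)

/-- lookup in coded list -/
def lk (e i : ℕ) : ℕ := ((Denumerable.ofNat (List ℕ) e).getD i 0).unpair.2

lemma lk_arrow {α β : Type*} [Encodable α] [Fintype α] [Encodable β] (f : α → β) (a : α) :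
    lk (@encode _ (fintypeArrowOfEncodable) f) (fintypeEquivFin a).val = encode (f a) := by
  rw [encode_arrow, lk, Denumerable.ofNat_encode]
  simp [List.getD_eq_getElem?_getD]

lemma encode_fin {k : ℕ} (q : Fin k) : encode q = q.val := rfl

lemma equivFin_fin {k : ℕ} (q : Fin k) : (fintypeEquivFin q).val = q.val := by
  rw [equivFin_val (fun c => c < k)]
  · rw [encode_fin]
    rw [List.filter_eq_self.2]
    · simp
    · intro c hc
      have := List.mem_range.1 hc
      have := q.2
      exact decide_eq_true (by omega)
  · intro c
    constructor
    · intro h; exact ⟨⟨c, h⟩, rfl⟩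
    · rintro ⟨a, rfl⟩; exact a.2

lemma encode_le_list (l : List ℕ) : ∀ a ∈ l, a ≤ encode l := by
  induction l with
  | nil => simp
  | cons b l ih =>
    intro a ha
    rw [encode_list_cons]
    have h1 := Nat.left_le_pair (encode b) (encode l)
    have h2 := Nat.right_le_pair (encode b) (encode l)
    rcases List.mem_cons.1 ha with rfl | h
    · simp only [encode_nat] at *; omega
    · have := ih a h; omega

lemma le_encode_arrow {α β : Type*} [Encodable α] [Fintype α] [Encodable β] (f : α → β) (a : α) :
    encode (f a) ≤ @encode _ (fintypeArrowOfEncodable) f := by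
  rw [encode_arrow]
  refine le_trans ?_ (encode_le_list _
    (Nat.pair (fintypeEquivFin a).val (encode (f a))) ?_)
  · exact Nat.right_le_pair _ _
  · rw [List.mem_ofFn]
    exact ⟨fintypeEquivFin a, by simp⟩

/-- decode an int code: move -/
def mvCode (v z : ℕ) : ℕ := if z % 2 = 0 then v + z / 2 else v - (z / 2 + 1)

lemma mvCode_spec (v : ℕ) (z : ℤ) (h : 0 ≤ (v : ℤ) + z) : ((mvCode v (encode z) : ℕ) : ℤ) = v + z := by
  rcases z with m | m
  · have : encode (Int.ofNat m) = 2 * m := rfl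
    rw [this, mvCode]; simp
  · have : encode (Int.negSucc m) = 2 * m + 1 := rfl
    rw [this, mvCode]
    rw [if_neg (by omega)]
    omega

lemma abs_le_encode (z : ℤ) : |z| ≤ (encode z : ℤ) + 1 := by
  rcases z with m | m
  · have : encode (Int.ofNat m) = 2 * m := rfl
    rw [this, abs_le]; simp; omega
  · have : encode (Int.negSucc m) = 2 * m + 1 := rfl
    rw [this, abs_le]; omega

/-- validity of the code of a word -/
def validW (n m c : ℕ) : Prop := (Denumerable.ofNat (List ℕ) c).length = m ∧
  ∀ i < m, ((Denumerable.ofNat (List ℕ) c).getD i 0).unpair.1 = i ∧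
    ((Denumerable.ofNat (List ℕ) c).getD i 0).unpair.2 < n

instance (n m c : ℕ) : Decidable (validW n m c) := by unfold validW; infer_instance

lemma validW_iff (n m c : ℕ) : validW n m c ↔
    ∃ p : Fin m → Fin n, @encode _ (finPi m (fun _ => Fin n)) p = c := by
  constructor
  · rintro ⟨h1, h2⟩
    refine ⟨fun i => ⟨_, (h2 i.1 i.2).2⟩, ?_⟩
    rw [encode_finPi]
    have : c = encode (Denumerable.ofNat (List ℕ) c) := (Denumerable.encode_ofNat c).symm
    conv_rhs => rw [this]
    congr 1
    apply List.ext_getElem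
    · simp [h1]
    · intro i hi hi'
      have hm : i < m := by omega
      have h3 := (h2 i hm).1
      simp only [List.getElem_ofFn, encode_fin]
      nth_rewrite 1 [← h3]
      rw [Nat.pair_unpair, List.getD_eq_getElem _ _ hi']
  · rintro ⟨p, rfl⟩
    rw [encode_finPi, validW, Denumerable.ofNat_encode]
    refine ⟨by simp, fun i hi => ?_⟩
    rw [List.getD_eq_getElem _ _ (by simpa using hi)]
    simp [encode_fin]

/-- code of word -/
def wcode (m : ℕ) (x : ℕ → ℕ) : ℕ := encode ((List.range m).map (fun i => Nat.pair i (x i)))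

lemma wcode_spec {n m : ℕ} (p : Fin m → Fin n) (x : ℕ → ℕ) (h : ∀ i : Fin m, x i = p i) :
    @encode _ (finPi m (fun _ => Fin n)) p = wcode m x := by
  rw [encode_finPi, wcode]
  congr 1
  apply List.ext_getElem
  · simp
  · intro i hi hi'
    have hm : i < m := by simpa using hi
    have := h ⟨i, hm⟩
    simp at this
    simp [encode_fin, this]

/-- index of word -/
def widx (n m c : ℕ) : ℕ := ((List.range c).filter (fun c => validW n m c)).length

/-- one simulated step; `e` code of the rule, `x` window contents -/
def entry (n e : ℕ) (x : ℕ → ℕ) (q : ℕ) : ℕ :=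
  lk (lk e.unpair.2 (widx n (2 * e.unpair.1 + 1) (wcode (2 * e.unpair.1 + 1) x))) q

lemma entry_spec {n k : ℕ} (R : FARule n k) (p : Fin (2 * R.rad + 1) → Fin n) (x : ℕ → ℕ)
    (h : ∀ i, x i.val = (p i).val) (q : Fin k) :
    entry n (encode R) x q = Nat.pair (R.next p q).1 (encode (R.next p q).2) := by
  have h0 : encode R = Nat.pair R.rad (@encode _ (@fintypeArrowOfEncodable
    (Fin (2 * R.rad + 1) → Fin n) (Fin k → Fin k × ℤ) (finPi _ (fun _ => Fin n)) _
      fintypeArrowOfEncodable) R.next) := rfl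
  let : Encodable (Fin k → Fin k × ℤ) := fintypeArrowOfEncodable
  let : Encodable (Fin (2 * R.rad + 1) → Fin n) := finPi _ (fun _ => Fin n)
  rw [entry, h0, Nat.unpair_pair]
  dsimp only
  rw [← wcode_spec p x h, widx, ← equivFin_val _ (validW_iff n (2 * R.rad + 1)) p, lk_arrow]
  rw [← equivFin_fin q, lk_arrow]
  rfl

lemma rad_le {n k : ℕ} (R : FARule n k) : R.rad ≤ encode R := by
  have h0 : encode R = Nat.pair R.rad (@encode _ (@fintypeArrowOfEncodable
    (Fin (2 * R.rad + 1) → Fin n) (Fin k → Fin k × ℤ) (finPi _ (fun _ => Fin n)) _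
      fintypeArrowOfEncodable) R.next) := rfl
  rw [h0]; exact Nat.left_le_pair _ _

lemma move_le {n k : ℕ} (R : FARule n k) (p : Fin (2 * R.rad + 1) → Fin n) (q : Fin k) :
    |(R.next p q).2| ≤ (encode R : ℤ) + 1 := by
  have h0 : encode R = Nat.pair R.rad (@encode _ (@fintypeArrowOfEncodable
    (Fin (2 * R.rad + 1) → Fin n) (Fin k → Fin k × ℤ) (finPi _ (fun _ => Fin n)) _
      fintypeArrowOfEncodable) R.next) := rfl
  let : Encodable (Fin k → Fin k × ℤ) := fintypeArrowOfEncodable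
  let : Encodable (Fin (2 * R.rad + 1) → Fin n) := finPi _ (fun _ => Fin n)
  have h1 := le_encode_arrow R.next p
  have h2 := le_encode_arrow (R.next p) q
  have h3 : encode (R.next p q) = Nat.pair (R.next p q).1 (encode (R.next p q).2) := rfl
  have h4 := Nat.right_le_pair (R.next p q).1 (encode (R.next p q).2)
  have h5 := Nat.right_le_pair R.rad (encode R.next)
  have h6 := abs_le_encode (R.next p q).2
  have h7 : encode R = Nat.pair R.rad (encode R.next) := h0
  have : encode (R.next p q).2 ≤ encode R := by
    rw [h7]; refine le_trans (le_trans ?_ h1) h5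
    refine le_trans ?_ h2
    rw [h3]; exact h4
  omega

end RFAAux

namespace RFAAux

section dyn
variable {A Q : Type}

/-- shift a head -/
def sh (s : ℤ) (a : ℤ × Q) : ℤ × Q := (a.1 + s, a.2)

@[simp] lemma sh_fst (s : ℤ) (a : ℤ × Q) : (sh s a).1 = a.1 + s := rfl

lemma sh_sh (s t : ℤ) (a : ℤ × Q) : sh s (sh t a) = sh (t + s) a := by
  simp [sh, add_assoc]

/-- first exit to the right of `b` in `t` steps -/
inductive Ex (f : ℤ × Q → ℤ × Q) (b : ℤ) : ℕ → ℤ × Q → ℤ × Q → Prop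
  | done (a : ℤ × Q) : b ≤ a.1 → Ex f b 0 a a
  | step (t : ℕ) (a c : ℤ × Q) : a.1 < b → Ex f b t (f a) c → Ex f b (t + 1) a c

lemma Ex.iter {f : ℤ × Q → ℤ × Q} {b : ℤ} {t : ℕ} {a c : ℤ × Q} (h : Ex f b t a c) :
    f^[t] a = c ∧ b ≤ c.1 := by
  induction h with
  | done a h => exact ⟨rfl, h⟩
  | step t a c h h' ih => exact ⟨ih.1, ih.2⟩

lemma Ex.det {f : ℤ × Q → ℤ × Q} {b : ℤ} {t : ℕ} {a c : ℤ × Q} (h : Ex f b t a c) :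
    ∀ {t' : ℕ} {c' : ℤ × Q}, Ex f b t' a c' → c = c' := by
  induction h with
  | done a h =>
    intro t' c' h'
    cases h' with
    | done => rfl
    | step t _ _ h2 => omega
  | step t a c h h' ih =>
    intro t' c' h2
    cases h2 with
    | done => omega
    | step t _ _ h3 h4 => exact ih h4

lemma Ex.exists_of_reach {f : ℤ × Q → ℤ × Q} {b : ℤ} (t : ℕ) : ∀ (a : ℤ × Q),
    b ≤ (f^[t] a).1 → ∃ t' c, Ex f b t' a c := by
  induction t with
  | zero => intro a h; exact ⟨0, a, .done a h⟩
  | succ t ih =>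
    intro a h
    by_cases hb : b ≤ a.1
    · exact ⟨0, a, .done a hb⟩
    · obtain ⟨t', c, h'⟩ := ih (f a) h
      exact ⟨t' + 1, c, .step _ _ _ (by omega) h'⟩

lemma Ex.split {f : ℤ × Q → ℤ × Q} {b b' : ℤ} (hb : b ≤ b') {t : ℕ} {a c : ℤ × Q}
    (h : Ex f b' t a c) : ∃ t1 t2 c0, t1 + t2 = t ∧ Ex f b t1 a c0 ∧ Ex f b' t2 c0 c ∧
      (t1 = 0 → b ≤ a.1) := by
  induction h with
  | done a h => exact ⟨0, 0, a, rfl, .done a (by omega), .done a h, fun _ => by omega⟩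
  | step t a c h h' ih =>
    by_cases hc : b ≤ a.1
    · exact ⟨0, t + 1, a, by omega, .done a hc, .step _ _ _ h h', fun _ => hc⟩
    · obtain ⟨t1, t2, c0, h1, h2, h3, -⟩ := ih
      exact ⟨t1 + 1, t2, c0, by omega, .step _ _ _ (by omega) h2, h3, by omega⟩

lemma Ex.join {f : ℤ × Q → ℤ × Q} {b b' : ℤ} (hb : b ≤ b') {t1 t2 : ℕ} {a c0 c : ℤ × Q}
    (h1 : Ex f b t1 a c0) (h2 : Ex f b' t2 c0 c) : ∃ t, Ex f b' t a c := by
  induction h1 with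
  | done a h => exact ⟨_, h2⟩
  | step t a c h h' ih =>
    obtain ⟨t', h3⟩ := ih h2
    exact ⟨t' + 1, .step _ _ _ (by omega) h3⟩

/-- exit relation -/
def Exi (f : ℤ × Q → ℤ × Q) (b : ℤ) (a c : ℤ × Q) : Prop := ∃ t, Ex f b t a c

variable (S : (ℤ → A) → ℤ × Q → ℤ × Q) (ρ : ℕ)

/-- locality -/
def Loc : Prop := ∀ (x y : ℤ → A) (s : ℤ) (a : ℤ × Q),
  (∀ u, a.1 - ρ ≤ u → u ≤ a.1 + ρ → y (u + s) = x u) → S y (sh s a) = sh s (S x a)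

/-- bounded moves -/
def Mv : Prop := ∀ (x : ℤ → A) (a : ℤ × Q), |(S x a).1 - a.1| ≤ ρ

variable {S ρ}

lemma Ex.range (hm : Mv S ρ) {x : ℤ → A} {b : ℤ} {t : ℕ} {a c : ℤ × Q}
    (h : Ex (S x) b t a c) : a.1 < b → c.1 < b + ρ := by
  induction h with
  | done a h => intro h'; omega
  | step t a c h h' ih =>
    intro _
    have h1 := abs_le.1 (hm x a)
    by_cases h2 : (S x a).1 < b
    · exact ih h2
    · cases h' with
      | done => omega
      | step _ _ _ h3 => omega

/-- simulation -/
lemma sim (hl : Loc S ρ) (hm : Mv S ρ) {x y : ℤ → A} {s b b' : ℤ} (hb : b ≤ b')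
    (hxy : ∀ u, b - ρ ≤ u → u < b' + ρ → y (u + s) = x u)
    (hE : ∀ a c : ℤ × Q, b - ρ ≤ a.1 → a.1 < b → Exi (S x) b a c →
      Exi (S y) (b + s) (sh s a) (sh s c)) :
    ∀ (t : ℕ) (a c : ℤ × Q), b - ρ ≤ a.1 → Ex (S x) b' t a c →
      Exi (S y) (b' + s) (sh s a) (sh s c) := by
  intro t
  induction t using Nat.strong_induction_on with
  | _ t ih =>
  intro a c ha h
  by_cases hab : a.1 < b
  · obtain ⟨t1, t2, c0, h1, h2, h3, h4⟩ := h.split hb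
    have ht1 : t1 ≠ 0 := fun h0 => by have := h4 h0; omega
    have hc0 := h2.iter.2
    obtain ⟨u1, g1⟩ := hE a c0 ha hab ⟨_, h2⟩
    obtain ⟨u2, g2⟩ := ih t2 (by omega) c0 c (by omega) h3
    exact Ex.join (by omega) g1 g2
  · cases h with
    | done _ h => exact ⟨0, .done _ (by simp; omega)⟩
    | step t _ _ h1 h2 =>
      have hst : S y (sh s a) = sh s (S x a) :=
        hl x y s a (fun u h3 h4 => hxy u (by omega) (by omega))
      have h1' := abs_le.1 (hm x a)
      obtain ⟨u, g⟩ := ih t (by omega) (S x a) c (by omega) h2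
      exact ⟨u + 1, .step _ _ _ (by simp; omega) (by rw [hst]; exact g)⟩

/-- exits depend only on the left part -/
lemma left_agree (hl : Loc S ρ) {x y : ℤ → A} {b : ℤ}
    (hxy : ∀ u, u < b + ρ → y u = x u) {t : ℕ} {a c : ℤ × Q} (h : Ex (S x) b t a c) :
    Ex (S y) b t a c := by
  induction h with
  | done a h => exact .done a h
  | step t a c h h' ih =>
    refine .step _ _ _ h ?_
    have := hl x y 0 a (fun u h3 h4 => by rw [add_zero]; exact hxy u (by omega))
    have hz : ∀ a : ℤ × Q, sh 0 a = a := fun a => by simp [sh]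
    rw [hz, hz] at this
    rw [this]; exact ih

/-- pumping -/
lemma pump (hl : Loc S ρ) (hm : Mv S ρ) (x : ℤ → A) (a0 e : ℤ × Q) (b s : ℤ) (hs : 0 < s)
    (hp : ∀ u, b - ρ ≤ u → u < b + ρ → x (u + s) = x u)
    (hE : ∀ a c : ℤ × Q, b - ρ ≤ a.1 → a.1 < b → Exi (S x) b a c →
      Exi (S x) (b + s) (sh s a) (sh s c))
    (h0 : Exi (S x) b a0 e) (h1 : Exi (S x) (b + s) a0 (sh s e)) :
    ∃ y : ℤ → A, ∀ j : ℕ, ∃ t, b + j * s ≤ ((S y)^[t] a0).1 := by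
  let y : ℤ → A := fun v => if v < b then x v else x (b + (v - b) % s)
  have yx : ∀ v, v < b + s + ρ → y v = x v := by
    have aux : ∀ m : ℕ, ∀ v, v < b + s + ρ → v - b < m → y v = x v := by
      intro m
      induction m with
      | zero =>
        intro v h1 h2
        have : v < b := by simpa using h2
        simp [y, this]
      | succ m ih =>
        intro v h1 h2
        by_cases hvb : v < b
        · simp [y, hvb]
        · by_cases hvs : v < b + s
          · simp only [y, if_neg hvb]
            rw [Int.emod_eq_of_lt (by omega) (by omega)]; congr 1; omega
          · have h3 := ih (v - s) (by omega) (by push_cast at h2; omega)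
            have h4 := hp (v - s) (by omega) (by omega)
            rw [sub_add_cancel] at h4
            rw [h4, ← h3]
            simp only [y, if_neg hvb, if_neg (show ¬ (v - s < b) by omega)]
            congr 2
            rw [show v - s - b = v - b - s by ring, Int.sub_emod_right]
    intro v hv
    exact aux ((v - b).toNat + 1) v hv (by push_cast; omega)
  have yp : ∀ v, b - ρ ≤ v → y (v + s) = y v := by
    intro v hv
    by_cases hvb : v < b
    · rw [yx _ (by omega), yx _ (by omega)]; exact hp v hv (by omega)
    · simp only [y, if_neg hvb, if_neg (show ¬ (v + s < b) by omega)]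
      congr 2
      rw [show v + s - b = v - b + s by ring, Int.add_emod_right]
  have ypj : ∀ j : ℕ, ∀ v, b - ρ ≤ v → y (v + j * s) = y v := by
    intro j
    induction j with
    | zero => intro v _; simp
    | succ j ih =>
      intro v hv
      have : (0:ℤ) ≤ j * s := by positivity
      rw [show v + ((j + 1 : ℕ) : ℤ) * s = (v + j * s) + s by push_cast; ring, yp _ (by omega), ih v hv]
  have exy : ∀ c, c ≤ b + s → ∀ a a', Exi (S x) c a a' ↔ Exi (S y) c a a' := by
    intro c hc a a'
    constructor
    · rintro ⟨t, h⟩; exact ⟨t, left_agree hl (fun u hu => yx u (by omega)) h⟩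
    · rintro ⟨t, h⟩; exact ⟨t, left_agree hl (fun u hu => (yx u (by omega)).symm) h⟩
  have H1 : ∀ a c : ℤ × Q, b - ρ ≤ a.1 → a.1 < b → Exi (S y) b a c →
      Exi (S y) (b + s) (sh s a) (sh s c) := by
    intro a c g1 g2 g3
    rw [← exy _ le_rfl]
    exact hE a c g1 g2 ((exy b (by omega) _ _).2 g3)
  have H : ∀ j : ℕ, ∀ a c : ℤ × Q, b - ρ ≤ a.1 → a.1 < b → Exi (S y) b a c →
      Exi (S y) (b + j * s) (sh (j * s) a) (sh (j * s) c) := by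
    intro j
    induction j with
    | zero => intro a c _ _ h; simpa [sh] using h
    | succ j ih =>
      intro a c g1 g2 g3
      obtain ⟨t, g4⟩ := H1 a c g1 g2 g3
      have := sim hl hm (x := y) (y := y) (s := j * s) (b := b) (b' := b + s) (by omega)
        (fun u h1 _ => ypj j u h1) ih t _ _ (by simp; omega) g4
      rw [sh_sh, sh_sh] at this
      rw [show b + ((j + 1 : ℕ) : ℤ) * s = b + s + j * s by push_cast; ring,
        show ((j + 1 : ℕ) : ℤ) * s = s + j * s by push_cast; ring]
      exact this
  rw [exy b (by omega)] at h0
  rw [exy (b + s) le_rfl] at h1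
  obtain ⟨t0, g0⟩ := h0
  have hee : Exi (S y) (b + s) e (sh s e) := by
    obtain ⟨t, g1⟩ := h1
    obtain ⟨t1, t2, c0, -, k2, k3, -⟩ := g1.split (b := b) (by omega)
    have := g0.det k2
    subst this
    exact ⟨_, k3⟩
  have hbe := g0.iter.2
  have K : ∀ j : ℕ, Exi (S y) (b + j * s) a0 (sh (j * s) e) := by
    intro j
    induction j with
    | zero =>
      have : Exi (S y) b a0 e := ⟨t0, g0⟩
      simpa [sh] using this
    | succ j ih =>
      obtain ⟨t, g4⟩ := hee
      obtain ⟨u1, k1⟩ := ih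
      obtain ⟨u2, k2⟩ := sim hl hm (x := y) (y := y) (s := j * s) (b := b) (b' := b + s) (by omega)
        (fun u h1 _ => ypj j u h1) (H j) t _ _ (by omega) g4
      rw [sh_sh] at k2
      rw [show b + ((j + 1 : ℕ) : ℤ) * s = b + s + j * s by push_cast; ring,
        show ((j + 1 : ℕ) : ℤ) * s = s + j * s by push_cast; ring]
      exact Ex.join (by omega) k1 k2
  refine ⟨y, fun j => ?_⟩
  obtain ⟨t, h⟩ := K j
  exact ⟨t, by rw [h.iter.1]; exact h.iter.2⟩

/-- torsion -/
def Tor (S : (ℤ → A) → ℤ × Q → ℤ × Q) : Prop := ∃ m : ℕ, 0 < m ∧ ∀ y a, (S y)^[m] a = a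

lemma not_tor_of_unbounded (y : ℤ → A) (a0 : ℤ × Q) (b s : ℤ) (hs : 0 < s)
    (h : ∀ j : ℕ, ∃ t, b + j * s ≤ ((S y)^[t] a0).1) : ¬ Tor S := by
  rintro ⟨m, hm0, hm⟩
  have hfin : ∀ t, (S y)^[t] a0 = (S y)^[t % m] a0 := by
    intro t
    have hp : Function.IsPeriodicPt (S y) m a0 := hm y a0
    exact (hp.iterate_mod_apply t).symm
  obtain ⟨M, hM⟩ : ∃ M : ℤ, ∀ i < m, ((S y)^[i] a0).1 ≤ M := by
    obtain ⟨M, hM⟩ := ((Set.finite_lt_nat m).image (fun i => ((S y)^[i] a0).1)).bddAbove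
    exact ⟨M, fun i hi => hM ⟨i, hi, rfl⟩⟩
  obtain ⟨t, ht⟩ := h (M - b + 1).toNat
  rw [hfin] at ht
  have h1 := hM _ (Nat.mod_lt t hm0)
  have h2 : (M - b + 1) ≤ ((M - b + 1).toNat : ℤ) := Int.self_le_toNat _
  have h3 : ((M - b + 1).toNat : ℤ) ≤ ((M - b + 1).toNat : ℤ) * s := by
    nlinarith [Int.natCast_nonneg (M - b + 1).toNat]
  omega

lemma reach_bound [Fintype A] [Fintype Q] (hl : Loc S ρ) (hm : Mv S ρ) (ht : Tor S) (x : ℤ → A)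
    (a0 : ℤ × Q) (t : ℕ) (C : ℕ)
    (hC : 2 ^ ((ρ * Fintype.card Q) * (ρ * Fintype.card Q)) * Fintype.card A ^ (2 * ρ) *
      (ρ * Fintype.card Q) = C) : ((S x)^[t] a0).1 ≤ a0.1 + C := by
  classical
  by_contra hcon
  push Not at hcon
  have hex : ∀ i : Fin (C + 1), ∃ c, Exi (S x) (a0.1 + 1 + i) a0 c := by
    intro i
    obtain ⟨t', c, h⟩ := Ex.exists_of_reach (f := S x) (b := a0.1 + 1 + i) t a0 (by omega)
    exact ⟨c, t', h⟩
  choose c hc using hex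
  have hcr : ∀ i, a0.1 + 1 + i ≤ (c i).1 ∧ (c i).1 < a0.1 + 1 + i + ρ := by
    intro i
    obtain ⟨t, h⟩ := hc i
    exact ⟨h.iter.2, h.range hm (by omega)⟩
  let D := ((((Fin ρ × Q) × (Fin ρ × Q)) → Bool) × (Fin (2 * ρ) → A)) × (Fin ρ × Q)
  let δ : Fin (C + 1) → D := fun i =>
    ((fun p => decide (Exi (S x) (a0.1 + 1 + i) (a0.1 + 1 + i - ρ + p.1.1, p.1.2)
        (a0.1 + 1 + i + p.2.1, p.2.2)),
      fun u => x (a0.1 + 1 + i - ρ + u)),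
      (⟨((c i).1 - (a0.1 + 1 + i)).toNat, by have := hcr i; omega⟩, (c i).2))
  have hcard : Fintype.card D < Fintype.card (Fin (C + 1)) := by
    have : Fintype.card D = C := by
      rw [← hC]; simp [D]
    rw [this]; simp
  obtain ⟨i, j, hij, hδ⟩ := Fintype.exists_ne_map_eq_of_card_lt δ hcard
  have main : ∀ i j : Fin (C + 1), i < j → δ i = δ j → False := by
    intro i j hij hδ
    have hd1 := congrArg (fun d : D => d.1.1) hδ
    have hd2 := congrArg (fun d : D => d.1.2) hδ
    have hd3 := congrArg (fun d : D => (d.2.1 : ℕ)) hδ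
    have hd4 := congrArg (fun d : D => d.2.2) hδ
    dsimp only [δ] at hd1 hd2 hd3 hd4
    have hij' : (i : ℕ) < j := hij
    set b : ℤ := a0.1 + 1 + i with hb
    set s : ℤ := (j : ℤ) - i with hs
    have hbs : a0.1 + 1 + (j : ℤ) = b + s := by omega
    have hri := hcr i
    have hrj := hcr j
    have hcj := hc j
    rw [hbs] at hd1 hd2 hd3 hrj hcj
    have hsp : 0 < s := by omega
    suffices hh : _ ∧ _ ∧ _ from by
      obtain ⟨y, hy⟩ := pump hl hm x a0 (c i) b s hsp hh.1 hh.2.1 (hc i) hh.2.2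
      exact not_tor_of_unbounded y a0 b s hsp hy ht
    refine ⟨?_, ?_, ?_⟩
    · intro u h1 h2
      have := congrFun hd2 ⟨(u - (b - ρ)).toNat, by omega⟩
      simp only at this
      rw [show b - ρ + ((u - (b - ρ)).toNat : ℤ) = u by omega,
        show b + s - ρ + ((u - (b - ρ)).toNat : ℤ) = u + s by omega] at this
      exact this.symm
    · intro a d h1 h2 h3
      have hd : b ≤ d.1 ∧ d.1 < b + ρ := by
        obtain ⟨t, h⟩ := h3
        exact ⟨h.iter.2, h.range hm h2⟩
      have := congrFun hd1 ((⟨(a.1 - (b - ρ)).toNat, by omega⟩, a.2),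
        (⟨(d.1 - b).toNat, by omega⟩, d.2))
      simp only [decide_eq_decide] at this
      rw [show b - ρ + ((a.1 - (b - ρ)).toNat : ℤ) = a.1 by omega,
        show b + s - ρ + ((a.1 - (b - ρ)).toNat : ℤ) = a.1 + s by omega,
        show b + ((d.1 - b).toNat : ℤ) = d.1 by omega,
        show b + s + ((d.1 - b).toNat : ℤ) = d.1 + s by omega] at this
      exact this.1 h3
    · have : c j = sh s (c i) := by
        refine Prod.ext ?_ hd4.symm
        simp only [sh_fst]; omega
      rw [← this]; exact hcj
  rcases lt_or_gt_of_ne hij with h | h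
  · exact main i j h hδ
  · exact main j i h hδ.symm

lemma tor_iff [Fintype A] [Fintype Q] (hl : Loc S ρ) (hm : Mv S ρ) (C : ℕ)
    (hC : 2 ^ ((ρ * Fintype.card Q) * (ρ * Fintype.card Q)) * Fintype.card A ^ (2 * ρ) *
      (ρ * Fintype.card Q) = C) :
    Tor S ↔ ∀ y a, (S y)^[((C + 1) * Fintype.card Q).factorial] a = a := by
  constructor
  swap
  · intro h; exact ⟨_, Nat.factorial_pos _, h⟩
  intro ht x a
  obtain ⟨m, hm0, hmm⟩ := id ht
  have hinj : Function.Injective (S x) := by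
    have h1 : (S x)^[m] = id := funext (hmm x)
    obtain ⟨m', rfl⟩ : ∃ m', m = m' + 1 := ⟨m - 1, by omega⟩
    rw [Function.iterate_succ] at h1
    have : Function.Injective ((S x)^[m'] ∘ (S x)) := by rw [h1]; exact Function.injective_id
    exact this.of_comp
  -- leftmost point
  obtain ⟨i0, hi0, hmin⟩ := Finset.exists_min_image (Finset.range m)
    (fun i => ((S x)^[i] a).1) ⟨0, by simpa using hm0⟩
  rw [Finset.mem_range] at hi0
  set a' := (S x)^[i0] a with ha'
  have hpa : Function.IsPeriodicPt (S x) m a := hmm x a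
  have hlow : ∀ t, a'.1 ≤ ((S x)^[t] a').1 := by
    intro t
    rw [ha', ← Function.iterate_add_apply, ← hpa.iterate_mod_apply (t + i0)]
    exact hmin _ (by simpa using Nat.mod_lt _ hm0)
  have hup : ∀ t, ((S x)^[t] a').1 ≤ a'.1 + C := fun t => reach_bound hl hm ht x a' t C hC
  set N := (C + 1) * Fintype.card Q with hN
  let φ : Fin (N + 1) → Fin (C + 1) × Q := fun t =>
    (⟨(((S x)^[t] a').1 - a'.1).toNat, by have := hlow t; have := hup t; omega⟩, ((S x)^[t] a').2)
  obtain ⟨i, j, hij, hφ⟩ := Fintype.exists_ne_map_eq_of_card_lt φ (by simp [hN])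
  have main : ∀ i j : Fin (N + 1), i < j → φ i = φ j →
      ∃ p, 0 < p ∧ p ≤ N ∧ Function.IsPeriodicPt (S x) p a' := by
    intro i j hij hφ
    simp only [φ, Prod.mk.injEq, Fin.mk.injEq] at hφ
    have h1 := hlow i
    have h2 := hlow j
    have hij' : (i : ℕ) < j := hij
    have heq : (S x)^[(i : ℕ)] a' = (S x)^[(j : ℕ)] a' := Prod.ext (by omega) hφ.2
    refine ⟨j - i, by omega, by omega, ?_⟩
    have h3 : (S x)^[(i : ℕ)] ((S x)^[(j : ℕ) - i] a') = (S x)^[(i : ℕ)] a' := by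
      rw [← Function.iterate_add_apply, heq]; congr 2; omega
    exact (hinj.iterate _) h3
  have hper : ∃ p, 0 < p ∧ p ≤ N ∧ Function.IsPeriodicPt (S x) p a' := by
    rcases lt_or_gt_of_ne hij with h | h
    · exact main i j h hφ
    · exact main j i h hφ.symm
  obtain ⟨p, hp0, hpN, hp⟩ := hper
  have hfac : Function.IsPeriodicPt (S x) N.factorial a' :=
    hp.trans_dvd (Nat.dvd_factorial hp0 hpN)
  have h5 : (S x)^[i0] ((S x)^[N.factorial] a) = (S x)^[i0] a := by
    rw [← Function.iterate_add_apply, add_comm, Function.iterate_add_apply]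
    exact hfac
  exact (hinj.iterate _) h5

end dyn
end RFAAux

namespace RFAAux
open Encodable

lemma primrec_ofNat : Primrec (Denumerable.ofNat (List ℕ)) := Primrec.ofNat _

lemma primrec_lk : Primrec₂ lk := by
  unfold lk
  exact Primrec.snd.comp (Primrec.unpair.comp
    ((Primrec.list_getD 0).comp (primrec_ofNat.comp Primrec.fst) Primrec.snd))

lemma primrec_pow : Primrec₂ (fun a b : ℕ => a ^ b) :=
  Primrec₂.unpaired'.1 Nat.Primrec.pow

lemma primrec_validW (n : ℕ) : PrimrecRel (fun c m : ℕ => validW n m c) := by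
  have hg : Primrec₂ (fun i c : ℕ => (Denumerable.ofNat (List ℕ) c).getD i 0) :=
    (Primrec.list_getD 0).comp (primrec_ofNat.comp Primrec.snd) Primrec.fst
  have h1 : PrimrecRel (fun i c : ℕ => ((Denumerable.ofNat (List ℕ) c).getD i 0).unpair.1 = i ∧
    ((Denumerable.ofNat (List ℕ) c).getD i 0).unpair.2 < n) := by
    refine PrimrecPred.and ?_ ?_
    · exact Primrec.eq.comp (Primrec.fst.comp (Primrec.unpair.comp hg)) Primrec.fst
    · exact Primrec.nat_lt.comp (Primrec.snd.comp (Primrec.unpair.comp hg)) (Primrec.const n)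
  have h2 := h1.forall_lt
  unfold validW
  refine PrimrecPred.and ?_ ?_
  · exact Primrec.eq.comp (Primrec.list_length.comp (primrec_ofNat.comp Primrec.fst)) Primrec.snd
  · exact h2.comp Primrec.snd Primrec.fst

lemma primrec_widx (n : ℕ) : Primrec₂ (fun m c : ℕ => widx n m c) := by
  unfold widx
  exact Primrec.list_length.comp
    (((primrec_validW n).listFilter).comp (Primrec.list_range.comp Primrec.snd) Primrec.fst)

lemma primrec_wcode {γ : Type*} [Primcodable γ] {m : γ → ℕ} {x : γ → ℕ → ℕ} (hm : Primrec m)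
    (hx : Primrec₂ x) : Primrec (fun a => wcode (m a) (x a)) := by
  unfold wcode
  refine Primrec.encode.comp (Primrec.list_map (Primrec.list_range.comp hm) ?_)
  exact Primrec₂.natPair.comp Primrec.snd hx

lemma primrec_entry (n : ℕ) {γ : Type*} [Primcodable γ] {e q : γ → ℕ} {x : γ → ℕ → ℕ}
    (he : Primrec e) (hx : Primrec₂ x) (hq : Primrec q) :
    Primrec (fun a => entry n (e a) (x a) (q a)) := by
  unfold entry
  have hm : Primrec (fun a => 2 * (e a).unpair.1 + 1) :=
    Primrec.succ.comp (Primrec.nat_mul.comp (Primrec.const 2)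
      (Primrec.fst.comp (Primrec.unpair.comp he)))
  refine primrec_lk.comp (primrec_lk.comp (Primrec.snd.comp (Primrec.unpair.comp he)) ?_) hq
  exact (primrec_widx n).comp hm (primrec_wcode hm hx)

lemma primrec_mvCode : Primrec₂ mvCode := by
  unfold mvCode
  refine Primrec.ite ?_ ?_ ?_
  · exact Primrec.eq.comp (Primrec.nat_mod.comp Primrec.snd (Primrec.const 2)) (Primrec.const 0)
  · exact Primrec.nat_add.comp Primrec.fst (Primrec.nat_div.comp Primrec.snd (Primrec.const 2))
  · exact Primrec.nat_sub.comp Primrec.fst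
      (Primrec.succ.comp (Primrec.nat_div.comp Primrec.snd (Primrec.const 2)))

/-- digits of a tape -/
def dg (n w j : ℕ) : ℕ := w / n ^ j % n

/-- one simulated step -/
def simStep (n e w : ℕ) (s : ℕ × ℕ) : ℕ × ℕ :=
  (mvCode s.1 (entry n e (fun i => dg n w (s.1 + i - e.unpair.1)) s.2).unpair.2,
    (entry n e (fun i => dg n w (s.1 + i - e.unpair.1)) s.2).unpair.1)

lemma primrec_simStep (n : ℕ) : Primrec₂ (fun (p : ℕ × ℕ) (s : ℕ × ℕ) => simStep n p.1 p.2 s) := by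
  have h : Primrec (fun a : (ℕ × ℕ) × (ℕ × ℕ) =>
      entry n a.1.1 (fun i => dg n a.1.2 (a.2.1 + i - a.1.1.unpair.1)) a.2.2) := by
    refine primrec_entry n (Primrec.fst.comp Primrec.fst) ?_ (Primrec.snd.comp Primrec.snd)
    unfold dg
    have h1 : Primrec (fun b : ((ℕ × ℕ) × (ℕ × ℕ)) × ℕ =>
        b.1.2.1 + b.2 - b.1.1.1.unpair.1) :=
      Primrec.nat_sub.comp (Primrec.nat_add.comp
        (Primrec.fst.comp (Primrec.snd.comp Primrec.fst)) Primrec.snd)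
        (Primrec.fst.comp (Primrec.unpair.comp (Primrec.fst.comp (Primrec.fst.comp Primrec.fst))))
    exact Primrec.nat_mod.comp (Primrec.nat_div.comp
      (Primrec.snd.comp (Primrec.fst.comp Primrec.fst))
      (primrec_pow.comp (Primrec.const n) h1)) (Primrec.const n)
  unfold simStep
  exact Primrec.pair (primrec_mvCode.comp (Primrec.fst.comp Primrec.snd)
    (Primrec.snd.comp (Primrec.unpair.comp h))) (Primrec.fst.comp (Primrec.unpair.comp h))

/-- number of boundary data -/
def cB (n k e : ℕ) : ℕ := 2 ^ (((e + 1) * k) * ((e + 1) * k)) * n ^ (2 * (e + 1)) * ((e + 1) * k)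

/-- exponent -/
def bB (n k e : ℕ) : ℕ := ((cB n k e + 1) * k).factorial

/-- half length -/
def lB (n k e : ℕ) : ℕ := (e + 1) * (bB n k e + 1)

lemma primrec_factorial : Primrec Nat.factorial := by
  refine (Primrec.nat_rec₁ (f := fun i r => (i + 1) * r) 1 ?_).of_eq ?_
  · exact Primrec.nat_mul.comp (Primrec.succ.comp Primrec.fst) Primrec.snd
  · intro m
    induction m with
    | zero => rfl
    | succ m ih => rw [Nat.factorial_succ, ← ih]

lemma primrec_cB (n k : ℕ) : Primrec (cB n k) := by
  unfold cB
  have h : Primrec (fun e => (e + 1) * k) := Primrec.nat_mul.comp Primrec.succ (Primrec.const k)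
  exact Primrec.nat_mul.comp (Primrec.nat_mul.comp
    (primrec_pow.comp (Primrec.const 2) (Primrec.nat_mul.comp h h))
    (primrec_pow.comp (Primrec.const n) (Primrec.nat_mul.comp (Primrec.const 2) Primrec.succ))) h

lemma primrec_bB (n k : ℕ) : Primrec (bB n k) := by
  unfold bB
  exact primrec_factorial.comp
    (Primrec.nat_mul.comp (Primrec.succ.comp (primrec_cB n k)) (Primrec.const k))

lemma primrec_lB (n k : ℕ) : Primrec (lB n k) := by
  unfold lB
  exact Primrec.nat_mul.comp Primrec.succ (Primrec.succ.comp (primrec_bB n k))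

/-- the decision predicate -/
def gP (n k e : ℕ) : Prop := ∀ w < n ^ (2 * lB n k e + 1), ∀ q < k,
  (simStep n e w)^[bB n k e] (lB n k e, q) = (lB n k e, q)

lemma primrec_gP (n k : ℕ) : PrimrecPred (gP n k) := by
  have h1 : PrimrecRel (fun (q : ℕ) (p : ℕ × ℕ) =>
      (simStep n p.1 p.2)^[bB n k p.1] (lB n k p.1, q) = (lB n k p.1, q)) := by
    have hs : Primrec (fun a : ℕ × (ℕ × ℕ) => (lB n k a.2.1, a.1)) :=
      Primrec.pair ((primrec_lB n k).comp (Primrec.fst.comp Primrec.snd)) Primrec.fst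
    refine Primrec.eq.comp ?_ hs
    refine Primrec.nat_iterate (h := fun (a : ℕ × (ℕ × ℕ)) s => simStep n a.2.1 a.2.2 s)
      ((primrec_bB n k).comp (Primrec.fst.comp Primrec.snd)) hs ?_
    exact (primrec_simStep n).comp (Primrec.snd.comp Primrec.fst) Primrec.snd
  have h2 : PrimrecRel (fun (w : ℕ) (e : ℕ) => ∀ q < k,
      (simStep n e w)^[bB n k e] (lB n k e, q) = (lB n k e, q)) := by
    have h := (h1.forall_mem_list).comp (α := ℕ × ℕ) (Primrec.const (List.range k))
      (Primrec.pair Primrec.snd Primrec.fst)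
    refine PrimrecPred.of_eq h ?_
    simp
  have hl : Primrec (fun e => n ^ (2 * lB n k e + 1)) :=
    primrec_pow.comp (Primrec.const n) (Primrec.succ.comp
      (Primrec.nat_mul.comp (Primrec.const 2) (primrec_lB n k)))
  exact h2.forall_lt.comp hl Primrec.id

end RFAAux

namespace RFAAux
open Encodable

/-- one step of the rule on the tape `x` -/
def stepR {n k : ℕ} (R : FARule n k) (x : ℤ → Fin n) (a : ℤ × Fin k) : ℤ × Fin k :=
  (a.1 + (R.next (fun i => x (a.1 + (i : ℤ) - (R.rad : ℤ))) a.2).2,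
    (R.next (fun i => x (a.1 + (i : ℤ) - (R.rad : ℤ))) a.2).1)

lemma loc_stepR {n k : ℕ} (R : FARule n k) : Loc (stepR R) (encode R + 1) := by
  intro x y s a h
  have hr := rad_le R
  have : (fun i : Fin (2 * R.rad + 1) => y ((sh s a).1 + (i : ℤ) - (R.rad : ℤ))) =
      (fun i : Fin (2 * R.rad + 1) => x (a.1 + (i : ℤ) - (R.rad : ℤ))) := by
    funext i
    have hi := i.2
    rw [← h _ (by push_cast; omega) (by push_cast; omega)]
    congr 1
    simp only [sh_fst]; ring
  unfold stepR
  rw [this]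
  simp only [sh, Prod.mk.injEq, and_true]
  ring

lemma mv_stepR {n k : ℕ} (R : FARule n k) : Mv (stepR R) (encode R + 1) := by
  intro x a
  have := move_le R (fun i => x (a.1 + (i : ℤ) - (R.rad : ℤ))) a.2
  simp only [stepR, add_sub_cancel_left]
  push_cast
  exact this

/-- configuration with a head -/
def conf {n k : ℕ} (x : ℤ → Fin n) (a : ℤ × Fin k) : X1 n k :=
  ⟨(x, fun t => if t = a.1 then some a.2 else none), by
    intro u v hu hv
    by_cases h1 : u = a.1
    · by_cases h2 : v = a.1
      · rw [h1, h2]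
      · simp [h2] at hv
    · simp [h1] at hu⟩

lemma conf_inj {n k : ℕ} {x : ℤ → Fin n} {a b : ℤ × Fin k} (h : conf x a = conf x b) : a = b := by
  have h1 : (conf x a).val.2 a.1 = (conf x b).val.2 a.1 := by rw [h]
  by_cases hab : a.1 = b.1
  · simp [conf, hab] at h1
    exact Prod.ext hab h1
  · simp [conf, hab] at h1

lemma T_conf {n k : ℕ} {R : FARule n k} {T : X1 n k → X1 n k} (hT : FAApplies R T)
    (x : ℤ → Fin n) (a : ℤ × Fin k) : T (conf x a) = conf x (stepR R x a) := by
  obtain ⟨h1, h2⟩ := hT.2 (conf x a) a.1 a.2 (by simp [conf])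
  apply Subtype.ext
  refine Prod.ext h1 ?_
  funext t
  rw [h2 t]
  rfl

lemma T_iter {n k : ℕ} {R : FARule n k} {T : X1 n k → X1 n k} (hT : FAApplies R T)
    (x : ℤ → Fin n) (m : ℕ) : ∀ a : ℤ × Fin k, T^[m] (conf x a) = conf x ((stepR R x)^[m] a) := by
  induction m with
  | zero => intro a; rfl
  | succ m ih =>
    intro a
    rw [Function.iterate_succ_apply, Function.iterate_succ_apply, T_conf hT, ih]

lemma T_tor {n k : ℕ} {R : FARule n k} {T : X1 n k → X1 n k} (hT : FAApplies R T) :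
    (∃ m : ℕ, 0 < m ∧ T^[m] = id) ↔ Tor (stepR R) := by
  constructor
  · rintro ⟨m, h0, h⟩
    refine ⟨m, h0, fun y a => ?_⟩
    apply conf_inj (x := y)
    rw [← T_iter hT, h]; rfl
  · rintro ⟨m, h0, h⟩
    refine ⟨m, h0, ?_⟩
    funext c
    by_cases hc : ∀ v, c.val.2 v = none
    · exact Function.iterate_fixed (hT.1 c hc) m
    · push Not at hc
      obtain ⟨v, hv⟩ := hc
      obtain ⟨q, hq⟩ := Option.ne_none_iff_exists'.1 hv
      have : c = conf c.val.1 (v, q) := by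
        apply Subtype.ext
        refine Prod.ext rfl ?_
        funext t
        by_cases ht : t = v
        · simp [conf, ht, hq]
        · simp only [conf, if_neg ht]
          by_contra hne
          exact ht (c.2 t v (Option.isSome_iff_ne_none.2 hne) (by simp [hq]))
      rw [this, T_iter hT, h]; rfl

/-- tape of a number -/
def tp (n : ℕ) (hn : 1 ≤ n) (w : ℕ) : ℤ → Fin n := fun u => ⟨dg n w u.toNat, Nat.mod_lt _ hn⟩

/-- cast -/
def cst {k : ℕ} (a : ℤ × Fin k) : ℕ × ℕ := (a.1.toNat, a.2)

lemma sim_one {n k : ℕ} (hn : 1 ≤ n) (R : FARule n k) (w : ℕ) (a : ℤ × Fin k)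
    (ha : (encode R : ℤ) + 1 ≤ a.1) :
    simStep n (encode R) w (cst a) = cst (stepR R (tp n hn w) a) := by
  obtain ⟨v, hv⟩ := Int.eq_ofNat_of_zero_le (a := a.1) (by omega)
  obtain ⟨a1, q⟩ := a
  simp only at hv ha
  subst hv
  have hr := rad_le R
  have hu : (encode R).unpair.1 = R.rad := by
    have h0 : encode R = Nat.pair R.rad (@encode _ (@fintypeArrowOfEncodable
      (Fin (2 * R.rad + 1) → Fin n) (Fin k → Fin k × ℤ) (finPi _ (fun _ => Fin n)) _
        fintypeArrowOfEncodable) R.next) := rfl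
    rw [h0, Nat.unpair_pair]
  have hes := entry_spec R (fun i => tp n hn w ((v : ℤ) + (i : ℤ) - (R.rad : ℤ)))
    (fun i => dg n w (v + i - R.rad)) (fun i => by
      simp only [tp]; congr 1; omega) q
  have hmv := move_le R (fun i => tp n hn w ((v : ℤ) + (i : ℤ) - (R.rad : ℤ))) q
  have hmv' := abs_le.1 hmv
  simp only [simStep, cst, stepR, hu, Int.toNat_natCast, hes, Nat.unpair_pair]
  refine Prod.ext ?_ rfl
  have := mvCode_spec v (R.next (fun i => tp n hn w ((v : ℤ) + (i : ℤ) - (R.rad : ℤ))) q).2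
    (by omega)
  simp only
  omega

lemma iter_bound {n k : ℕ} (R : FARule n k) (x : ℤ → Fin n) (a : ℤ × Fin k) (t : ℕ) :
    |((stepR R x)^[t] a).1 - a.1| ≤ ((encode R : ℤ) + 1) * t := by
  induction t with
  | zero => simp
  | succ t ih =>
    rw [Function.iterate_succ_apply']
    have h := mv_stepR R x ((stepR R x)^[t] a)
    rw [abs_le] at *
    push_cast at *
    constructor <;> nlinarith

lemma sim_iter {n k : ℕ} (hn : 1 ≤ n) (R : FARule n k) (w : ℕ) (L : ℕ) (q : Fin k) (B : ℕ)
    (hL : L = (encode R + 1) * (B + 1)) (t : ℕ) (ht : t ≤ B) :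
    (simStep n (encode R) w)^[t] (L, q.val) = cst ((stepR R (tp n hn w))^[t] ((L : ℤ), q)) := by
  induction t with
  | zero => simp [cst]
  | succ t ih =>
    rw [Function.iterate_succ_apply', Function.iterate_succ_apply', ih (by omega), sim_one]
    have h := iter_bound R (tp n hn w) ((L : ℤ), q) t
    rw [abs_le] at h
    have h1 := h.1
    simp only at h1
    have h2 : (L : ℤ) = ((encode R : ℤ) + 1) * (B + 1) := by rw [hL]; push_cast; ring
    have h3 : (t : ℤ) + 1 ≤ B := by exact_mod_cast ht
    nlinarith

lemma exists_word (n N : ℕ) (hn : 1 ≤ n) (x : ℕ → Fin n) :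
    ∃ w < n ^ N, ∀ j < N, dg n w j = x j := by
  let f : Fin N → Fin n := fun i => x i
  refine ⟨finFunctionFinEquiv f, (finFunctionFinEquiv f).2, fun j hj => ?_⟩
  have := congrFun (finFunctionFinEquiv.symm_apply_apply f) ⟨j, hj⟩
  have h2 := congrArg Fin.val this
  rw [finFunctionFinEquiv_symm_apply_val] at h2
  exact h2

lemma gP_iff {n k : ℕ} (hn : 1 ≤ n) (R : FARule n k) : gP n k (encode R) ↔ Tor (stepR R) := by
  rw [tor_iff (loc_stepR R) (mv_stepR R) (cB n k (encode R)) (by simp [cB])]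
  rw [Fintype.card_fin]
  change _ ↔ ∀ y a, (stepR R y)^[bB n k (encode R)] a = a
  unfold gP
  have hL : lB n k (encode R) = (encode R + 1) * (bB n k (encode R) + 1) := rfl
  generalize bB n k (encode R) = B at *
  generalize lB n k (encode R) = L at *
  have h2 : (L : ℤ) = ((encode R : ℤ) + 1) * (B + 1) := by rw [hL]; push_cast; ring
  constructor
  · intro h x a
    obtain ⟨w, hw, hwx⟩ := exists_word n (2 * L + 1) hn (fun j => x (j - L + a.1))
    have hs := h w hw a.2 a.2.2
    rw [sim_iter hn R w L a.2 B hL B le_rfl] at hs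
    have hag : ∀ t ≤ B, (stepR R x)^[t] a =
        sh (a.1 - L) ((stepR R (tp n hn w))^[t] ((L : ℤ), a.2)) := by
      intro t
      induction t with
      | zero => intro _; simp [sh]
      | succ t ih =>
        intro ht
        rw [Function.iterate_succ_apply', Function.iterate_succ_apply', ih (by omega)]
        apply loc_stepR R
        intro u hu1 hu2
        have hb := abs_le.1 (iter_bound R (tp n hn w) ((L : ℤ), a.2) t)
        simp only at hb
        have h3 : (t : ℤ) + 1 ≤ B := by exact_mod_cast ht
        have hb1 := hb.1
        have hb2 := hb.2
        push_cast at hu1 hu2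
        have g1 : 0 ≤ u := by nlinarith
        have g2 : u ≤ 2 * L := by nlinarith
        have := hwx u.toNat (by omega)
        apply Fin.ext
        simp only [tp]
        rw [this]
        congr 2
        omega
    rw [hag B le_rfl]
    have hb := abs_le.1 (iter_bound R (tp n hn w) ((L : ℤ), a.2) B)
    simp only [cst, Prod.mk.injEq] at hs
    have g1 : 0 ≤ ((stepR R (tp n hn w))^[B] ((L : ℤ), a.2)).1 := by
      have := hb.1
      simp only at this
      nlinarith
    refine Prod.ext ?_ (Fin.ext hs.2)
    simp only [sh_fst]
    omega
  · intro h w _ q hq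
    have := sim_iter hn R w L ⟨q, hq⟩ B hL B le_rfl
    simp only at this
    rw [this, h]
    simp [cst]

end RFAAux

/-- The torsion problem of `RFA(ℤ,n,k)` is decidable: there is an algorithm
(a computable function on encodings of local rules) which, given a local rule
defining a reversible finite-state machine, decides whether the machine has
finite order. -/
theorem rfa_torsion_decidable (n k : ℕ) (hn : 1 ≤ n) (hk : 1 ≤ k) :
    ∃ g : ℕ → Bool, Computable g ∧
      ∀ (R : FARule n k) (T : X1 n k → X1 n k),
        FAApplies R T → IsRTM1 T →
        (g (Encodable.encode R) = true ↔ ∃ m : ℕ, 0 < m ∧ T^[m] = id) := by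
  classical
  refine ⟨fun e => decide (RFAAux.gP n k e), (RFAAux.primrec_gP n k).decide.to_comp, ?_⟩
  intro R T hT _
  rw [decide_eq_true_iff, RFAAux.gP_iff hn, RFAAux.T_tor hT]
end
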